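/- Let (R,m) be a Cohen–Macaulay local ring of dimension two with infinite residue field, I_1,…,I_s m-primary ideals with s≥2, and F = {F(n)}_{n∈ℤ^s} an I-admissible filtration with H^1_{R_{++}}(R(F))_n = 0 for all n≥0. Then the following are equivalent: (1) P(F) = ℕ^s, i.e. P_F(n) = H_F(n) for all n≥0; (2) r_A(F) ≤ 1 for every good complete reduction A of F; (2') there exists a good complete reduction A of F with r_A(F) ≤ 1. -/

import Mathlib

/-! Common definitions for multigraded filtrations of ideals
(following Sarkar–Verma, "Postulation and reduction vectors of
multigraded filtrations of ideals"). -/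

open Finset IsLocalRing

/-- The vector `e = (1,…,1) ∈ ℤˢ`. -/
def evec (s : ℕ) : Fin s → ℤ := fun _ => 1

/-- `n⁺`, the componentwise positive part of a vector. -/
def vplus {s : ℕ} (n : Fin s → ℤ) : Fin s → ℤ := fun i => max (n i) 0

/-- `I^n = I₁^{n₁} ⋯ I_s^{n_s}` with the convention `I_i^{n_i} = R` for `n_i ≤ 0`. -/
def prodPow {R : Type*} [CommRing R] {s : ℕ} (I : Fin s → Ideal R) (n : Fin s → ℤ) : Ideal R :=
  ∏ i, I i ^ (n i).toNat

/-- An ideal is `m`-primary iff it is proper and contains a power of the maximal ideal. -/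
def IsMPrimary (R : Type*) [CommRing R] [IsLocalRing R] (I : Ideal R) : Prop :=
  I ≠ ⊤ ∧ maximalIdeal R ≤ I.radical

/-- A Cohen–Macaulay local ring: some system of parameters (a regular sequence of
length equal to the Krull dimension inside the maximal ideal) exists. -/
def IsCMLocal (R : Type*) [CommRing R] [IsLocalRing R] : Prop :=
  ∃ rs : List R, (∀ x ∈ rs, x ∈ maximalIdeal R) ∧ RingTheory.Sequence.IsRegular R rs ∧
    (rs.length : WithBot ℕ∞) = ringKrullDim R

/-- A `ℤˢ`-graded `I`-admissible filtration of ideals.  Admissibility (finiteness of the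
extended Rees ring `R'(F)` as a module over `R'(I)`) is recorded through the equivalent
condition that `F(n + m) = I^n F(m)` for all `n ≥ 0`, for a suitable fixed `m ≥ 0`. -/
structure AdmissibleFiltration (R : Type*) [CommRing R] (s : ℕ) (I : Fin s → Ideal R) where
  F : (Fin s → ℤ) → Ideal R
  prodPow_le : ∀ n, prodPow I n ≤ F n
  mul_le : ∀ m n, F m * F n ≤ F (m + n)
  antitone : ∀ m n : Fin s → ℤ, m ≤ n → F n ≤ F m
  plus_eq : ∀ n, F n = F (vplus n)
  admissible : ∃ m : Fin s → ℤ, 0 ≤ m ∧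
    ∀ n : Fin s → ℤ, 0 ≤ n → F (n + m) = prodPow I n * F m

/-- The length `λ_R(M)` of a module, as an integer (the longest chain of submodules;
this is the usual length for modules of finite length). -/
noncomputable def lenI (R M : Type*) [CommRing R] [AddCommGroup M] [Module R M] : ℤ :=
  (((Order.krullDim (Submodule R M)).unbotD 0).toNat : ℤ)

/-- The Hilbert function `H_F(n) = λ(R/F(n))` of a filtration. -/
noncomputable def hilbFn {R : Type*} [CommRing R] {s : ℕ} {I : Fin s → Ideal R}
    (F : AdmissibleFiltration R s I) (n : Fin s → ℤ) : ℤ :=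
  lenI R (R ⧸ F.F n)

/-- The multigraded Hilbert polynomial with coefficient data `c = (e_α)`:
`P(n) = Σ_{|α| ≤ d} (−1)^{d−|α|} e_α ∏ᵢ binom(nᵢ+αᵢ−1, αᵢ)`. -/
noncomputable def hilbPoly (s d : ℕ) (c : (Fin s → ℕ) → ℤ) (n : Fin s → ℤ) : ℤ :=
  ∑ α ∈ Finset.univ.filter (fun α : Fin s → Fin (d+1) => (∑ i, (α i : ℕ)) ≤ d),
    (-1)^(d - ∑ i, (α i : ℕ)) * c (fun i => (α i : ℕ)) *
      ∏ i, Ring.choose (n i + ((α i : ℕ) : ℤ) - 1) (α i : ℕ)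

/-- `c : (Fin s → ℕ) → ℤ` is the family of Hilbert coefficients of `F`:
the corresponding polynomial agrees with the Hilbert function for all large `n`. -/
noncomputable def IsHilbCoeffs {R : Type*} [CommRing R] {s : ℕ} {I : Fin s → Ideal R}
    (F : AdmissibleFiltration R s I) (d : ℕ) (c : (Fin s → ℕ) → ℤ) : Prop :=
  ∃ N : ℕ, ∀ n : Fin s → ℤ, (∀ i, (N : ℤ) ≤ n i) → hilbPoly s d c n = hilbFn F n

/-- The Samuel polynomial `P_a(n) = Σ_{i=0}^{d} (−1)^i e_i binom(n+d−1−i, d−i)` with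
coefficient data `c = (e_i)`. -/
noncomputable def samuelPoly (d : ℕ) (c : ℕ → ℤ) (n : ℤ) : ℤ :=
  ∑ i ∈ Finset.range (d + 1), (-1)^i * c i * Ring.choose (n + (d : ℤ) - 1 - (i : ℤ)) (d - i)

/-- `c` is the family of Hilbert coefficients of the `m`-primary ideal `a`. -/
noncomputable def IsSamuelCoeffs {R : Type*} [CommRing R] (a : Ideal R) (d : ℕ)
    (c : ℕ → ℤ) : Prop :=
  ∃ N : ℕ, ∀ n : ℕ, N ≤ n → samuelPoly d c (n : ℤ) = lenI R (R ⧸ a ^ n)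

section Reductions

variable {R : Type*} [CommRing R] {s d : ℕ} {I : Fin s → Ideal R}

/-- The ideal `J = (y₁,…,y_d)` of a complete reduction datum, where `y_j = x_{1j}⋯x_{sj}`. -/
def crIdeal (x : Fin s → Fin d → R) : Ideal R :=
  Ideal.span (Set.range fun j => ∏ i, x i j)

/-- `A = {x_{ij} ∈ I_i}` is a complete reduction of `F`: `J·F(n) = F(n+e)` for all large `n`. -/
def IsCompleteReduction (F : AdmissibleFiltration R s I) (x : Fin s → Fin d → R) : Prop :=
  (∀ i j, x i j ∈ I i) ∧
  ∃ N : ℕ, ∀ n : Fin s → ℤ, (∀ i, (N : ℤ) ≤ n i) →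
    crIdeal x * F.F n = F.F (n + evec s)

/-- A good complete reduction: in addition `F(m) ∩ (y₁) = y₁ F(m−e)` for all large `m`. -/
def IsGoodCompleteReduction (F : AdmissibleFiltration R s I) (x : Fin s → Fin d → R) : Prop :=
  IsCompleteReduction F x ∧
  ∀ h : 0 < d, ∃ N : ℕ, ∀ m : Fin s → ℤ, (∀ i, (N : ℤ) ≤ m i) →
    F.F m ⊓ Ideal.span {∏ i, x i ⟨0, h⟩} =
      Ideal.span {∏ i, x i ⟨0, h⟩} * F.F (m - evec s)

end Reductions

/-- The first difference operator `Δ¹ f (n) = f(n+e) − f(n)`; `Δ^k` is its `k`-th iterate. -/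
def deltaOp {s : ℕ} (f : (Fin s → ℤ) → ℤ) : (Fin s → ℤ) → ℤ :=
  fun n => f (n + evec s) - f n

/-- The Ratliff–Rush closure filtration `F̆(n) = ⋃_{k ≥ 1} (F(n+ke) : F(e)^k)`. -/
def ratliffRush {R : Type*} [CommRing R] {s : ℕ} {I : Fin s → Ideal R}
    (F : AdmissibleFiltration R s I) (n : Fin s → ℤ) : Ideal R :=
  ⨆ k : ℕ, (F.F (n + ((k + 1) : ℕ) • evec s)).colon ((F.F (evec s) ^ (k + 1) : Ideal R) : Set R)

/-- Vanishing of `H¹_{R₊₊}(R(F))_n` for all `n ∈ ℕˢ`.  By Proposition 4.1 of the paper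
(see STATEMENT 9), the degree-`n` component of this local cohomology module is isomorphic
to `F̆(n)/F(n)`, so its vanishing for all `n ≥ 0` is the statement that the Ratliff–Rush
closure filtration agrees with `F` in all nonnegative degrees. -/
def H1ReesVanishes {R : Type*} [CommRing R] {s : ℕ} {I : Fin s → Ideal R}
    (F : AdmissibleFiltration R s I) : Prop :=
  ∀ n : Fin s → ℤ, 0 ≤ n → ratliffRush F n = F.F n

section PostulationReduction

variable {R : Type*} [CommRing R] {s d : ℕ} {I : Fin s → Ideal R}

/-- The set `P(F)` of postulation vectors of `F` (w.r.t. the Hilbert coefficient data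
`c` of its Hilbert polynomial): those `n ∈ ℤˢ` with `H_F(m) = P_F(m)` for all `m ≥ n`. -/
noncomputable def postSet (F : AdmissibleFiltration R s I) (d : ℕ)
    (c : (Fin s → ℕ) → ℤ) : Set (Fin s → ℤ) :=
  {n | ∀ m : Fin s → ℤ, n ≤ m → hilbFn F m = hilbPoly s d c m}

/-- The set `R_A(F)` of reduction vectors of `F` with respect to a complete reduction
datum `x`: those `r ∈ ℕˢ` with `J·F(n) = F(n+e)` for all `n ≥ r`. -/
def redSet (F : AdmissibleFiltration R s I) (x : Fin s → Fin d → R) :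
    Set (Fin s → ℤ) :=
  {r | 0 ≤ r ∧ ∀ n : Fin s → ℤ, r ≤ n → crIdeal x * F.F n = F.F (n + evec s)}

/-- The complete reduction number `r_A(F)`: the least `k ∈ ℕ` such that
`J·F(n) = F(n+e)` for all `n ≥ ke`. -/
noncomputable def crNumber (F : AdmissibleFiltration R s I) (x : Fin s → Fin d → R) : ℕ :=
  sInf {k : ℕ | ∀ n : Fin s → ℤ, (∀ i, (k : ℤ) ≤ n i) →
    crIdeal x * F.F n = F.F (n + evec s)}

end PostulationReduction

section PartA

variable {R : Type*} [CommRing R]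

/-- length of the cyclic quotient -/
noncomputable def lq (K : Ideal R) : ℕ∞ := Module.length R (R ⧸ K)

lemma lenI_eq (K : Ideal R) : lenI R (R ⧸ K) = ((lq K).toNat : ℤ) := by
  unfold lenI lq
  rw [← Module.coe_length]
  rfl

lemma lq_colon (K : Ideal R) (y : R) :
    lq K = lq (K.colon ({y} : Set R)) + lq (K ⊔ Ideal.span {y}) := by
  let f : (R ⧸ (K.colon ({y} : Set R))) →ₗ[R] (R ⧸ K) :=
    Submodule.mapQ _ _ (LinearMap.mulRight R y) (by
      intro r hr
      simpa [Submodule.mem_colon_singleton] using hr)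
  let g : (R ⧸ K) →ₗ[R] (R ⧸ (K ⊔ Ideal.span {y})) :=
    Submodule.mapQ _ _ LinearMap.id (by intro r hr; exact Submodule.mem_sup_left hr)
  refine Module.length_eq_add_of_exact f g ?_ ?_ ?_
  · rw [injective_iff_map_eq_zero]
    intro a
    obtain ⟨a, rfl⟩ := Submodule.Quotient.mk_surjective _ a
    intro h
    have h' : a * y ∈ K := (Submodule.Quotient.mk_eq_zero K).1 h
    exact (Submodule.Quotient.mk_eq_zero _).2 (Submodule.mem_colon_singleton.2 h')
  · intro a
    obtain ⟨a, rfl⟩ := Submodule.Quotient.mk_surjective _ a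
    exact ⟨Submodule.Quotient.mk a, rfl⟩
  · intro a
    obtain ⟨a, rfl⟩ := Submodule.Quotient.mk_surjective _ a
    constructor
    · intro h
      have h' : a ∈ K ⊔ Ideal.span {y} := (Submodule.Quotient.mk_eq_zero _).1 h
      obtain ⟨k, hk, z, hz, rfl⟩ := Submodule.mem_sup.1 h'
      obtain ⟨t, rfl⟩ := Ideal.mem_span_singleton'.1 hz
      refine ⟨Submodule.Quotient.mk t, ?_⟩
      refine (Submodule.Quotient.eq K).2 ?_
      have : (LinearMap.mulRight R y) t - (k + t * y) = -k := by simp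
      rw [this]; exact K.neg_mem hk
    · rintro ⟨t, ht⟩
      obtain ⟨t, rfl⟩ := Submodule.Quotient.mk_surjective _ t
      have h' : t * y - a ∈ K := (Submodule.Quotient.eq K).1 ht
      refine (Submodule.Quotient.mk_eq_zero _).2 ?_
      have : a = -(t * y - a) + t * y := by ring
      show a ∈ _
      rw [this]
      exact Submodule.add_mem_sup (K.neg_mem h') (Ideal.mem_span_singleton'.2 ⟨t, rfl⟩)

lemma lq_modular (A B : Ideal R) : lq A + lq B = lq (A ⊓ B) + lq (A ⊔ B) := by
  let f : (R ⧸ (A ⊓ B)) →ₗ[R] (R ⧸ A) × (R ⧸ B) :=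
    LinearMap.prod (Submodule.mapQ _ _ LinearMap.id (by intro r hr; exact hr.1))
      (Submodule.mapQ _ _ LinearMap.id (by intro r hr; exact hr.2))
  let g : (R ⧸ A) × (R ⧸ B) →ₗ[R] (R ⧸ (A ⊔ B)) :=
    LinearMap.coprod (Submodule.mapQ _ _ LinearMap.id (by intro r hr; exact Submodule.mem_sup_left hr))
     (-Submodule.mapQ _ _ LinearMap.id (by intro r hr; exact Submodule.mem_sup_right hr))
  unfold lq
  rw [← Module.length_prod]
  have hg : ∀ a b : R, g (Submodule.Quotient.mk a, Submodule.Quotient.mk b)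
      = Submodule.Quotient.mk (a - b) := by
    intro a b
    simp [g, sub_eq_add_neg]
  refine Module.length_eq_add_of_exact f g ?_ ?_ ?_
  · rw [injective_iff_map_eq_zero]
    intro a
    obtain ⟨a, rfl⟩ := Submodule.Quotient.mk_surjective _ a
    intro h
    have h1 : a ∈ A := (Submodule.Quotient.mk_eq_zero A).1 (congrArg Prod.fst h)
    have h2 : a ∈ B := (Submodule.Quotient.mk_eq_zero B).1 (congrArg Prod.snd h)
    exact (Submodule.Quotient.mk_eq_zero _).2 ⟨h1, h2⟩
  · intro a
    obtain ⟨a, rfl⟩ := Submodule.Quotient.mk_surjective _ a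
    exact ⟨(Submodule.Quotient.mk a, Submodule.Quotient.mk 0), by rw [hg]; simp⟩
  · rintro ⟨a, b⟩
    obtain ⟨a, rfl⟩ := Submodule.Quotient.mk_surjective _ a
    obtain ⟨b, rfl⟩ := Submodule.Quotient.mk_surjective _ b
    rw [hg]
    constructor
    · intro h
      have h' : a - b ∈ A ⊔ B := (Submodule.Quotient.mk_eq_zero _).1 h
      obtain ⟨u, hu, v, hv, huv⟩ := Submodule.mem_sup.1 h'
      refine ⟨Submodule.Quotient.mk (a - u), ?_⟩
      refine Prod.ext ?_ ?_
      · refine (Submodule.Quotient.eq A).2 ?_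
        have : (LinearMap.id (R := R) (M := R)) (a - u) - a = -u := by simp
        rw [this]; exact A.neg_mem hu
      · refine (Submodule.Quotient.eq B).2 ?_
        have : (LinearMap.id (R := R) (M := R)) (a - u) - b = v := by
          simp only [LinearMap.id_apply]; linear_combination -huv
        rw [this]; exact hv
    · rintro ⟨t, ht⟩
      obtain ⟨t, rfl⟩ := Submodule.Quotient.mk_surjective _ t
      have h1 : t - a ∈ A := (Submodule.Quotient.eq A).1 (congrArg Prod.fst ht)
      have h2 : t - b ∈ B := (Submodule.Quotient.eq B).1 (congrArg Prod.snd ht)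
      refine (Submodule.Quotient.mk_eq_zero _).2 ?_
      have : a - b = -(t - a) + (t - b) := by ring
      rw [this]
      exact Submodule.add_mem_sup (A.neg_mem h1) h2

lemma lq_anti {A B : Ideal R} (h : A ≤ B) : lq B ≤ lq A :=
  Module.length_le_of_surjective (Submodule.factor h) (Submodule.factor_surjective h)

lemma lq_eq_imp {A B : Ideal R} (h : A ≤ B) (hA : lq A ≠ ⊤) (he : lq A = lq B) : A = B := by
  let N : Submodule R (R ⧸ A) := Submodule.map A.mkQ B
  have e : ((R ⧸ A) ⧸ N) ≃ₗ[R] (R ⧸ B) := Submodule.quotientQuotientEquivQuotient A B h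
  have h1 := e.length_eq
  have hfl := Module.length_ne_top_iff.1 hA
  have h2 := Module.length_eq_add_of_exact N.subtype N.mkQ N.injective_subtype
    N.mkQ_surjective (LinearMap.exact_subtype_mkQ N)
  have h3 : Module.length R N = 0 := by
    have : lq A = Module.length R N + lq B := by
      unfold lq; rw [h2, h1]
    rw [he] at this hA
    have h4 : (0 : ℕ∞) + lq B = Module.length R N + lq B := by rw [zero_add]; exact this
    exact (ENat.add_left_injective_of_ne_top hA h4).symm
  rw [Module.length_eq_zero_iff] at h3
  have h4 : N = ⊥ := (Submodule.eq_bot_of_subsingleton)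
  refine le_antisymm h ?_
  intro b hb
  have : A.mkQ b ∈ N := ⟨b, hb, rfl⟩
  rw [h4] at this
  exact (Submodule.Quotient.mk_eq_zero A).1 this

lemma lq_finite [IsLocalRing R] [IsNoetherianRing R] {K : Ideal R} (k : ℕ)
    (h : maximalIdeal R ^ k ≤ K) : lq K ≠ ⊤ := by
  have : IsArtinianRing (R ⧸ K) := by
    by_cases hK : K = ⊤
    · subst hK
      have : Subsingleton (R ⧸ (⊤ : Ideal R)) := Ideal.Quotient.subsingleton_iff.2 rfl
      infer_instance
    have : Nontrivial (R ⧸ K) := Ideal.Quotient.nontrivial_iff.mpr hK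
    have := IsLocalRing.of_surjective' (Ideal.Quotient.mk K) Ideal.Quotient.mk_surjective
    have := IsLocalHom.of_surjective (Ideal.Quotient.mk K) Ideal.Quotient.mk_surjective
    rw [isArtinianRing_iff_isNilpotent_maximalIdeal]
    refine ⟨k, ?_⟩
    have : (maximalIdeal R).map (Ideal.Quotient.mk K) = maximalIdeal (R ⧸ K) := by
      ext x
      obtain ⟨x, rfl⟩ := Ideal.Quotient.mk_surjective x
      simp [sup_eq_left.mpr (le_maximalIdeal hK)]
    rw [← this, ← Ideal.map_pow, Ideal.zero_eq_bot, Ideal.map_eq_bot_iff_le_ker, Ideal.mk_ker]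
    exact h
  unfold lq
  have e := Module.length_eq_of_surjective (S := R) (R := R ⧸ K) (M := R ⧸ K) Ideal.Quotient.mk_surjective
  rw [e]
  exact Module.length_ne_top

/-- Koszul acyclicity -/
def Kos (y₁ y₂ : R) : Prop := ∀ r s : R, r * y₁ + s * y₂ = 0 → ∃ t, r = t * y₂ ∧ s = - (t * y₁)

lemma kos_of_reg (a b : R) (ha : ∀ r, a * r = 0 → r = 0)
    (hb : ∀ r c, b * r = a * c → ∃ d, r = a * d) (y₁ y₂ : R) (n : ℕ)
    (h1 : a ^ n ∈ Ideal.span {y₁, y₂}) (h2 : b ^ n ∈ Ideal.span {y₁, y₂}) : Kos y₁ y₂ := by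
  have ha' : ∀ k r, a ^ k * r = 0 → r = 0 := by
    intro k
    induction k with
    | zero => intro r h; simpa using h
    | succ k ih => intro r h; exact ih r (ha _ (by rw [← h]; ring))
  have hb1 : ∀ k r c, b * r = a ^ k * c → ∃ d, r = a ^ k * d := by
    intro k
    induction k with
    | zero => intro r c _; exact ⟨r, by simp⟩
    | succ k ih =>
      intro r c h
      obtain ⟨d, rfl⟩ := hb r (a ^ k * c) (by rw [h]; ring)
      have : b * d = a ^ k * c := by
        have := ha (b * d - a ^ k * c) (by linear_combination h)
        linear_combination this
      obtain ⟨d', rfl⟩ := ih d c this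
      exact ⟨d', by ring⟩
  have hb2 : ∀ k l r c, b ^ l * r = a ^ k * c → ∃ d, r = a ^ k * d := by
    intro k l
    induction l with
    | zero => intro r c h; exact ⟨c, by simpa using h⟩
    | succ l ih =>
      intro r c h
      obtain ⟨d, hd⟩ := hb1 k (b ^ l * r) c (by rw [← h]; ring)
      exact ih r d hd
  obtain ⟨α, β, hα⟩ := Ideal.mem_span_pair.1 h1
  obtain ⟨γ, δ, hγ⟩ := Ideal.mem_span_pair.1 h2
  intro r s hrs
  obtain ⟨t, ht⟩ := hb2 n n (-α * s + β * r) (-γ * s + δ * r) (by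
    rw [← hα, ← hγ]; linear_combination (β * γ - α * δ) * hrs)
  refine ⟨t, ?_, ?_⟩
  · have := ha' n (t * y₂ - r) (by
      linear_combination (-y₂) * ht + (r) * hα - α * hrs)
    linear_combination -this
  · have := ha' n (t * y₁ + s) (by
      linear_combination (-y₁) * ht - s * hα + β * hrs)
    linear_combination this

lemma huneke {y₁ y₂ : R} (hk : Kos y₁ y₂) (K : Ideal R)
    (hfin : lq (Ideal.span {y₁, y₂} * K) ≠ ⊤) :
    ((lq (Ideal.span {y₁, y₂} * K)).toNat : ℤ) =
      (lq (Ideal.span {y₁, y₂})).toNat + 2 * (lq K).toNat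
        - (lq (K.colon (Ideal.span {y₁, y₂} : Set R))).toNat := by
  set J : Ideal R := Ideal.span {y₁, y₂} with hJ
  have memJK : ∀ z, z ∈ J * K ↔ ∃ a ∈ K, ∃ b ∈ K, z = a * y₁ + b * y₂ := by
    intro z
    have : J * K = Ideal.span {y₁} * K ⊔ Ideal.span {y₂} * K := by
      rw [hJ, Ideal.span_insert, Ideal.sup_mul]
    rw [this, Submodule.mem_sup]
    constructor
    · rintro ⟨u, hu, v, hv, rfl⟩
      obtain ⟨a, ha, rfl⟩ := Ideal.mem_span_singleton_mul.1 hu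
      obtain ⟨b, hb, rfl⟩ := Ideal.mem_span_singleton_mul.1 hv
      exact ⟨a, ha, b, hb, by ring⟩
    · rintro ⟨a, ha, b, hb, rfl⟩
      exact ⟨a * y₁, Ideal.mem_span_singleton_mul.2 ⟨a, ha, by ring⟩, b * y₂,
        Ideal.mem_span_singleton_mul.2 ⟨b, hb, by ring⟩, rfl⟩
  set K1 := K.colon ({y₁} : Set R) with hK1
  set K2 := K.colon ({y₂} : Set R) with hK2
  have mK1 : ∀ z, z ∈ K1 ↔ z * y₁ ∈ K := fun z => Submodule.mem_colon_singleton
  have mK2 : ∀ z, z ∈ K2 ↔ z * y₂ ∈ K := fun z => Submodule.mem_colon_singleton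
  have e1 := lq_colon (J * K) y₁
  have e2 := lq_colon (J * K ⊔ Ideal.span {y₁}) y₂
  have e3 := lq_colon ((J * K).colon ({y₁} : Set R)) y₂
  have e4 := lq_colon K y₁
  have e5 := lq_colon K y₂
  have e6 := lq_modular K1 K2
  have f1 : (J * K ⊔ Ideal.span {y₁}) ⊔ Ideal.span {y₂} = J := by
    rw [sup_assoc, ← Ideal.span_insert, ← hJ]
    exact sup_eq_right.2 Ideal.mul_le_left
  have f2 : (J * K ⊔ Ideal.span {y₁}).colon ({y₂} : Set R) = K ⊔ Ideal.span {y₁} := by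
    ext z
    rw [Submodule.mem_colon_singleton, Submodule.mem_sup, Submodule.mem_sup]
    constructor
    · rintro ⟨u, hu, v, hv, huv⟩
      obtain ⟨a, ha, b, hb, rfl⟩ := (memJK u).1 hu
      obtain ⟨c, rfl⟩ := Ideal.mem_span_singleton'.1 hv
      obtain ⟨t, ht1, ht2⟩ := hk (a + c) (b - z) (by
        rw [smul_eq_mul] at huv; linear_combination huv)
      exact ⟨b, hb, t * y₁, Ideal.mem_span_singleton'.2 ⟨t, rfl⟩, by linear_combination ht2⟩
    · rintro ⟨b, hb, v, hv, rfl⟩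
      obtain ⟨c, rfl⟩ := Ideal.mem_span_singleton'.1 hv
      refine ⟨b * y₂, (memJK _).2 ⟨0, K.zero_mem, b, hb, by ring⟩, (c * y₂) * y₁,
        Ideal.mem_span_singleton'.2 ⟨_, rfl⟩, by rw [smul_eq_mul]; ring⟩
  have mf3 : ∀ z, z ∈ (J * K).colon ({y₁} : Set R) ↔ ∃ a ∈ K, ∃ t ∈ K1, z = a + t * y₂ := by
    intro z
    rw [Submodule.mem_colon_singleton, memJK, smul_eq_mul]
    constructor
    · rintro ⟨a, ha, b, hb, h⟩
      obtain ⟨t, ht1, ht2⟩ := hk (z - a) (-b) (by linear_combination h)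
      refine ⟨a, ha, t, (mK1 t).2 ?_, by linear_combination ht1⟩
      have : t * y₁ = b := by linear_combination ht2
      rwa [this]
    · rintro ⟨a, ha, t, ht, rfl⟩
      exact ⟨a, ha, t * y₁, (mK1 t).1 ht, by ring⟩
  have f3 : (J * K).colon ({y₁} : Set R) ⊔ Ideal.span {y₂} = K ⊔ Ideal.span {y₂} := by
    apply le_antisymm
    · refine sup_le ?_ le_sup_right
      intro z hz
      obtain ⟨a, ha, t, _, rfl⟩ := (mf3 z).1 hz
      exact Submodule.add_mem_sup ha (Ideal.mem_span_singleton'.2 ⟨t, rfl⟩)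
    · refine sup_le_sup_right ?_ _
      intro z hz
      exact (mf3 z).2 ⟨z, hz, 0, K1.zero_mem, by ring⟩
  have f4 : ((J * K).colon ({y₁} : Set R)).colon ({y₂} : Set R) = K1 ⊔ K2 := by
    ext z
    rw [Submodule.mem_colon_singleton, mf3, Submodule.mem_sup, smul_eq_mul]
    constructor
    · rintro ⟨a, ha, t, ht, h⟩
      exact ⟨t, ht, z - t, (mK2 _).2 (by
        have : (z - t) * y₂ = a := by linear_combination h
        rwa [this]), by ring⟩
    · rintro ⟨t, ht, u, hu, rfl⟩
      exact ⟨u * y₂, (mK2 _).1 hu, t, ht, by ring⟩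
  have f5 : K.colon (J : Set R) = K1 ⊓ K2 := by
    ext z
    rw [Submodule.mem_colon, Submodule.mem_inf, mK1, mK2]
    constructor
    · intro h
      exact ⟨h y₁ (Ideal.subset_span (by simp)), h y₂ (Ideal.subset_span (by simp))⟩
    · rintro ⟨h1, h2⟩ w hw
      obtain ⟨a, b, rfl⟩ := Ideal.mem_span_pair.1 hw
      have : z • (a * y₁ + b * y₂) = a * (z * y₁) + b * (z * y₂) := by rw [smul_eq_mul]; ring
      rw [this]
      exact K.add_mem (K.mul_mem_left _ h1) (K.mul_mem_left _ h2)
  rw [f1, f2] at e2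
  rw [f3, f4] at e3
  rw [f5]
  -- finiteness
  have hJKK : J * K ≤ K := Ideal.mul_le_right
  have fin : ∀ {L : Ideal R}, J * K ≤ L → ∃ k : ℕ, lq L = k := fun {L} hL => by
    have h1 : lq L ≠ ⊤ := ne_top_of_le_ne_top hfin (lq_anti hL)
    exact ⟨(lq L).toNat, (ENat.natCast_toNat h1).symm⟩
  have hKK1 : K ≤ K1 := fun z hz => (mK1 z).2 (K.mul_mem_right _ hz)
  have hKK2 : K ≤ K2 := fun z hz => (mK2 z).2 (K.mul_mem_right _ hz)
  obtain ⟨n1, g1⟩ := fin (le_refl (J * K))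
  obtain ⟨n2, g2⟩ := fin (Ideal.mul_le_left : J * K ≤ J)
  obtain ⟨n3, g3⟩ := fin hJKK
  obtain ⟨n4, g4⟩ := fin (hJKK.trans (le_inf hKK1 hKK2))
  obtain ⟨n5, g5⟩ := fin (hJKK.trans hKK1)
  obtain ⟨n6, g6⟩ := fin (hJKK.trans hKK2)
  obtain ⟨n7, g7⟩ := fin (hJKK.trans (hKK2.trans (le_sup_right : K2 ≤ K1 ⊔ K2)))
  obtain ⟨n8, g8⟩ := fin (hJKK.trans (le_sup_left : K ≤ K ⊔ Ideal.span {y₁}))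
  obtain ⟨n9, g9⟩ := fin (hJKK.trans (le_sup_left : K ≤ K ⊔ Ideal.span {y₂}))
  obtain ⟨n10, g10⟩ := fin (le_sup_left : J * K ≤ J * K ⊔ Ideal.span {y₁})
  obtain ⟨n11, g11⟩ := fin (L := (J * K).colon ({y₁} : Set R)) (fun z hz =>
    Submodule.mem_colon_singleton.2 (Ideal.mul_mem_right _ _ hz))
  rw [g1, g2, g3, g4]
  rw [g1, g11, g10] at e1
  rw [g10, g8, g2] at e2
  rw [g11, g7, g9] at e3
  rw [g3, g5, g8] at e4
  rw [g3, g6, g9] at e5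
  rw [g5, g6, g4, g7] at e6
  norm_cast at e1 e2 e3 e4 e5 e6
  simp only [ENat.toNat_natCast]
  omega

end PartA

section PartB

lemma superficial_abs {A Q : Type*} [CommRing A] [IsNoetherianRing A] [AddCommGroup Q] [Module A Q]
    [Module.Finite A Q] (𝔞 : Ideal A) (x : A)
    (hx : ∀ P ∈ associatedPrimes A Q, x ∈ P → 𝔞 ≤ P) :
    ∃ c : ℕ, ∀ n ≥ c, ∀ q ∈ (𝔞 ^ n • ⊤ : Submodule A Q), x • q = 0 → q = 0 := by
  let N : Submodule A Q := LinearMap.ker (LinearMap.lsmul A Q x)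
  have hN : ∀ q, q ∈ N ↔ x • q = 0 := fun q => by simp [N]
  have hrad : 𝔞 ≤ (Module.annihilator A N).radical := by
    rw [← Ideal.sInf_minimalPrimes]
    refine le_sInf ?_
    intro P hP
    have h1 := Module.associatedPrimes.minimalPrimes_annihilator_subset_associatedPrimes A N hP
    have h2 := associatedPrimes.subset_of_injective (N.injective_subtype) h1
    refine hx P h2 ?_
    refine h1.annihilator_le ?_
    rw [Module.mem_annihilator]
    intro m
    exact Subtype.ext (Subtype.ext ((hN _).1 m.1.2))
  obtain ⟨k, hk⟩ := Ideal.exists_pow_le_of_le_radical_of_fg hrad (IsNoetherian.noetherian _)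
  obtain ⟨c, hc⟩ := Ideal.exists_pow_inf_eq_pow_smul 𝔞 N
  refine ⟨c + k, ?_⟩
  intro n hn q hq hxq
  have h3 : q ∈ 𝔞 ^ n • ⊤ ⊓ N := ⟨hq, (hN q).2 hxq⟩
  rw [hc n (by omega)] at h3
  have h4 : 𝔞 ^ (n - c) • (𝔞 ^ c • ⊤ ⊓ N) ≤ (⊥ : Submodule A Q) := by
    rw [Submodule.smul_le]
    intro r hr m hm
    have hr' := hk (Ideal.pow_le_pow_right (by omega : k ≤ n - c) hr)
    rw [Module.mem_annihilator] at hr'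
    have := congrArg Subtype.val (hr' ⟨m, hm.2⟩)
    simpa using this
  simpa using h4 h3

lemma avoid {R : Type*} [CommRing R] [IsLocalRing R] [Infinite (IsLocalRing.ResidueField R)]
    {ι : Type*} [Finite ι] (T : Set (Submodule R (ι → R))) (hT : T.Finite)
    (h : ∀ U ∈ T, U ≠ ⊤) : ∃ v : ι → R, ∀ U ∈ T, v ∉ U := by
  classical
  let k := IsLocalRing.ResidueField R
  let π : (ι → R) →ₗ[R] (ι → k) := LinearMap.compLeft (Algebra.linearMap R k) ι
  have hπs : Function.Surjective π := by
    intro w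
    choose v hv using fun i => IsLocalRing.residue_surjective (w i)
    exact ⟨v, funext hv⟩
  let f : Submodule R (ι → R) → Subspace k (ι → k) := fun U =>
    { carrier := U.map π
      add_mem' := fun ha hb => (U.map π).add_mem ha hb
      zero_mem' := (U.map π).zero_mem
      smul_mem' := by
        intro c x hx
        obtain ⟨r, rfl⟩ := IsLocalRing.residue_surjective c
        have := (U.map π).smul_mem r hx
        have e : (IsLocalRing.residue R r) • x = r • x := by
          ext i; simp only [Pi.smul_apply, Algebra.smul_def]; rfl
        rw [e]; exact this }
  have hf : ∀ U w, w ∈ f U ↔ w ∈ U.map π := fun U w => Iff.rfl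
  have hne : ∀ U ∈ T, f U ≠ ⊤ := by
    intro U hU htop
    apply h U hU
    have h1 : (⊤ : Submodule R (ι → R)) ≤ U ⊔ (maximalIdeal R) • (⊤ : Submodule R (ι → R)) := by
      intro v _
      have : π v ∈ f U := by rw [htop]; trivial
      obtain ⟨u, hu, huv⟩ := this
      have h2 : v = u + (v - u) := by abel
      rw [h2]
      refine Submodule.add_mem_sup hu ?_
      have h3 : ∀ i, (v - u) i ∈ maximalIdeal R := by
        intro i
        have := congrFun huv i
        have h4 : IsLocalRing.residue R (u i) = IsLocalRing.residue R (v i) := this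
        rw [← IsLocalRing.residue_eq_zero_iff]
        simp [h4]
      have := Fintype.ofFinite ι
      have h5 : (v - u) = ∑ i, (v - u) i • (Pi.single i 1 : ι → R) := by
        exact pi_eq_sum_univ' (v - u) |>.trans (by simp)
      rw [h5]
      exact Submodule.sum_mem _ fun i _ => Submodule.smul_mem_smul (h3 i) trivial
    have := Submodule.le_of_le_smul_of_le_jacobson_bot (Module.Finite.fg_top)
      (IsLocalRing.maximalIdeal_le_jacobson _) h1
    exact top_le_iff.1 this
  have hT' : (f '' T).Finite := hT.image f
  have h1 := Subspace.biUnion_ne_univ_of_top_notMem (s := hT'.toFinset) (by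
    simp only [Set.Finite.mem_toFinset, Set.mem_image, not_exists, not_and]
    exact hne)
  obtain ⟨w, hw⟩ := (Set.ne_univ_iff_exists_notMem _).1 h1
  obtain ⟨v, rfl⟩ := hπs w
  refine ⟨v, fun U hU hv => hw ?_⟩
  simp only [Set.mem_iUnion]
  exact ⟨f U, by simpa using ⟨U, hU, rfl⟩, (hf _ _).2 ⟨v, hv, rfl⟩⟩

open MvPolynomial in
lemma superficial {R : Type*} [CommRing R] [IsLocalRing R] [IsNoetherianRing R]
    [Infinite (IsLocalRing.ResidueField R)] {s : ℕ} (I : Fin s → Ideal R)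
    (M₀ : Ideal R) (G : (Fin s →₀ ℕ) → Ideal R)
    (hG : ∀ i n, I i * G n ≤ G (n + Finsupp.single i 1)) (i₀ : Fin s) :
    ∃ x ∈ I i₀, ∃ c : ℕ, ∀ n : Fin s →₀ ℕ, c ≤ n i₀ → ∀ f ∈ (∏ i, I i ^ (n i)) * M₀,
      x * f ∈ G (n + Finsupp.single i₀ 1) → f ∈ G n := by
  classical
  have hgen : ∀ i, ∃ (g : ℕ) (u : Fin g → R), Ideal.span (Set.range u) = I i := fun i =>
    Submodule.fg_iff_exists_fin_generating_family.1 (IsNoetherian.noetherian (I i))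
  choose g u hu using hgen
  let σ := Σ i, Fin (g i)
  let A := MvPolynomial σ R
  let S := MvPolynomial (Fin s) R
  let φ : A →ₐ[R] S := aeval (fun p : σ => monomial (Finsupp.single p.1 1) (u p.1 p.2))
  let _ : Algebra A S := φ.toRingHom.toAlgebra
  have hsm : ∀ (p : A) (f : S), p • f = φ p * f := fun p f => Algebra.smul_def p f
  let G' : Submodule A S :=
    { carrier := {f | ∀ n, coeff n f ∈ G n}
      add_mem' := fun ha hb n => by rw [coeff_add]; exact (G n).add_mem (ha n) (hb n)
      zero_mem' := fun n => by rw [coeff_zero]; exact (G n).zero_mem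
      smul_mem' := by
        intro p f hf
        revert f
        change ∀ f : S, (∀ n, coeff n f ∈ G n) → ∀ n, coeff n (p • f) ∈ G n
        refine MvPolynomial.induction_on (motive := fun p : MvPolynomial σ R => ∀ f : S,
          (∀ n, coeff n f ∈ G n) → ∀ n, coeff n ((p : A) • f) ∈ G n) p ?_ ?_ ?_
        · intro r f hf n
          have : (C r : A) • f = C r * f := by
            rw [hsm]; congr 1; exact φ.commutes r
          rw [this, coeff_C_mul]
          exact (G n).mul_mem_left _ (hf n)
        · intro p q hp hq f hf n
          rw [add_smul, coeff_add]
          exact (G n).add_mem (hp f hf n) (hq f hf n)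
        · intro p l hp f hf n
          rw [mul_smul]
          refine hp _ ?_ n
          intro n
          have : (X l : A) • f = monomial (Finsupp.single l.1 1) (u l.1 l.2) * f := by
            rw [hsm]; congr 1; exact aeval_X _ _
          rw [this, coeff_monomial_mul']
          split_ifs with hle
          · have h1 := hG l.1 (n - Finsupp.single l.1 1) (Ideal.mul_mem_mul
              (show u l.1 l.2 ∈ I l.1 by rw [← hu]; exact Ideal.subset_span ⟨l.2, rfl⟩) (hf _))
            rwa [tsub_add_cancel_of_le hle] at h1
          · exact (G n).zero_mem }
  have mG' : ∀ f : S, f ∈ G' ↔ ∀ n, coeff n f ∈ G n := fun f => Iff.rfl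
  obtain ⟨B, hB⟩ := (IsNoetherian.noetherian M₀ : M₀.FG)
  let M' : Submodule A S := Submodule.span A ((fun m => (C m : S)) '' (B : Set R))
  have hM' : ∀ m ∈ M₀, (C m : S) ∈ M' := by
    intro m hm
    rw [← hB] at hm
    induction hm using Submodule.span_induction with
    | mem m hm => exact Submodule.subset_span ⟨m, hm, rfl⟩
    | zero => rw [C_0]; exact M'.zero_mem
    | add a b _ _ ha hb => rw [C_add]; exact M'.add_mem ha hb
    | smul r m _ hm =>
      have : (C (r • m) : S) = (C r : A) • (C m : S) := by
        rw [hsm, smul_eq_mul, C_mul]; congr 1; exact (φ.commutes r).symm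
      rw [this]; exact M'.smul_mem _ hm
  have hMfg : M'.FG := ⟨B.image (fun m => (C m : S)), by rw [Finset.coe_image]⟩
  let Q : Submodule A (S ⧸ G') := M'.map G'.mkQ
  have hQ : Q.FG := hMfg.map _
  have : Module.Finite A Q := Module.Finite.iff_fg.2 hQ
  have : IsNoetherianRing A := inferInstance
  let 𝔞 : Ideal A := Ideal.span (Set.range fun l : Fin (g i₀) => (X ⟨i₀, l⟩ : A))
  let θ : (Fin (g i₀) → R) →ₗ[R] A := Fintype.linearCombination R (fun l => (X ⟨i₀, l⟩ : A))
  have hθ1 : ∀ l, θ (Pi.single l 1) = X ⟨i₀, l⟩ := fun l => by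
    simp [θ]
  let T : Set (Submodule R (Fin (g i₀) → R)) :=
    (fun P : Ideal A => (P.restrictScalars R).comap θ) '' {P ∈ associatedPrimes A Q | ¬ 𝔞 ≤ P}
  have hTf : T.Finite := Set.Finite.image _ ((associatedPrimes.finite A Q).subset (Set.sep_subset _ _))
  obtain ⟨v, hv⟩ := avoid T hTf (by
    rintro _ ⟨P, ⟨_, hP⟩, rfl⟩ htop
    apply hP
    refine Ideal.span_le.2 ?_
    rintro _ ⟨l, rfl⟩
    have : Pi.single l 1 ∈ (P.restrictScalars R).comap θ := by
      have htop' : (P.restrictScalars R).comap θ = ⊤ := htop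
      rw [htop']; trivial
    have h2 : θ (Pi.single l 1) ∈ P := this
    rwa [hθ1] at h2)
  obtain ⟨c, hc⟩ := superficial_abs (Q := Q) 𝔞 (θ v) (by
    intro P hP hx
    by_contra hcon
    exact hv _ ⟨P, ⟨hP, hcon⟩, rfl⟩ hx)
  have hφX : ∀ l : σ, φ (X l) = monomial (Finsupp.single l.1 1) (u l.1 l.2) := fun l => aeval_X _ _
  have hφθ : φ (θ v) = monomial (Finsupp.single i₀ 1) (∑ l, v l * u i₀ l) := by
    simp only [θ, Fintype.linearCombination_apply, map_sum, map_smul, hφX]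
    exact Finset.sum_congr rfl fun l _ => smul_monomial _
  -- the ideals of representable coefficients
  let E : (Fin s →₀ ℕ) → ℕ → Ideal R := fun n k =>
    { carrier := {a | ∃ p ∈ 𝔞 ^ k, φ p = monomial n a}
      add_mem' := by
        rintro a b ⟨p, hp, hpa⟩ ⟨q, hq, hqb⟩
        exact ⟨p + q, Ideal.add_mem _ hp hq, by rw [map_add, hpa, hqb, map_add]⟩
      zero_mem' := ⟨0, Ideal.zero_mem _, by simp⟩
      smul_mem' := by
        rintro r a ⟨p, hp, hpa⟩
        refine ⟨C r * p, Ideal.mul_mem_left _ _ hp, ?_⟩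
        rw [map_mul, hpa]
        have : φ (C r) = C r := φ.commutes r
        rw [this, C_mul_monomial]; rfl }
  have mE : ∀ n k a, a ∈ E n k ↔ ∃ p ∈ 𝔞 ^ k, φ p = monomial n a := fun _ _ _ => Iff.rfl
  have hEmul : ∀ n k n' k', E n k * E n' k' ≤ E (n + n') (k + k') := by
    intro n k n' k'
    rw [Ideal.mul_le]
    rintro a ⟨p, hp, hpa⟩ b ⟨q, hq, hqb⟩
    refine ⟨p * q, ?_, ?_⟩
    · rw [pow_add]; exact Ideal.mul_mem_mul hp hq
    · rw [map_mul, hpa, hqb, monomial_mul]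
  have hE0 : E 0 0 = ⊤ := by
    rw [Ideal.eq_top_iff_one]
    exact ⟨1, by simp, by rw [map_one]; rfl⟩
  have hE1 : ∀ i, I i ≤ E (Finsupp.single i 1) (if i = i₀ then 1 else 0) := by
    intro i
    rw [← hu i, Ideal.span_le]
    rintro _ ⟨l, rfl⟩
    refine ⟨X ⟨i, l⟩, ?_, hφX _⟩
    split_ifs with h
    · subst h
      rw [pow_one]; exact Ideal.subset_span ⟨l, rfl⟩
    · simp
  have hE2 : ∀ i k, I i ^ k ≤ E (Finsupp.single i k) (if i = i₀ then k else 0) := by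
    intro i k
    induction k with
    | zero => simp [hE0]
    | succ k ih =>
      rw [pow_succ]
      refine (Ideal.mul_mono ih (hE1 i)).trans ((hEmul _ _ _ _).trans (le_of_eq ?_))
      rw [← Finsupp.single_add]
      congr 1
      split_ifs <;> simp
  have hE3 : ∀ (n : Fin s →₀ ℕ) (t : Finset (Fin s)), (∏ i ∈ t, I i ^ n i) ≤
      E (∑ i ∈ t, Finsupp.single i (n i)) (∑ i ∈ t, if i = i₀ then n i else 0) := by
    intro n t
    induction t using Finset.induction_on with
    | empty => simp [hE0]
    | insert a t ha ih =>
      rw [Finset.prod_insert ha, Finset.sum_insert ha, Finset.sum_insert ha]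
      exact (Ideal.mul_mono (hE2 _ _) ih).trans (hEmul _ _ _ _)
  have hE4 : ∀ n : Fin s →₀ ℕ, (∏ i, I i ^ n i) ≤ E n (n i₀) := by
    intro n
    have := hE3 n Finset.univ
    simpa [Finsupp.univ_sum_single] using this
  refine ⟨∑ l, v l * u i₀ l, ?_, c, ?_⟩
  · refine Ideal.sum_mem _ fun l _ => Ideal.mul_mem_left _ _ ?_
    rw [← hu]; exact Ideal.subset_span ⟨l, rfl⟩
  intro n hn f hf hxf
  have h1 : (monomial n f : S) ∈ 𝔞 ^ (n i₀) • M' := by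
    refine Submodule.mul_induction_on hf ?_ ?_
    · intro a ha m hm
      obtain ⟨p, hp, hpa⟩ := hE4 n ha
      have : (monomial n (a * m) : S) = p • (C m : S) := by
        rw [hsm, hpa, mul_comm a m, ← C_mul_monomial, mul_comm]
      rw [this]
      exact Submodule.smul_mem_smul hp (hM' m hm)
    · intro a b ha hb
      rw [map_add]; exact Submodule.add_mem _ ha hb
  have h2 : G'.mkQ (monomial n f) ∈ 𝔞 ^ (n i₀) • Q := by
    have := Submodule.mem_map_of_mem (f := G'.mkQ) h1
    rwa [Submodule.map_smul''] at this
  have h3 : G'.mkQ (monomial n f) ∈ Q := Submodule.smul_le_right h2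
  have h4 : (⟨_, h3⟩ : Q) ∈ (𝔞 ^ (n i₀) • ⊤ : Submodule A Q) := by
    have e : Submodule.map Q.subtype (𝔞 ^ (n i₀) • ⊤) = 𝔞 ^ (n i₀) • Q := by
      rw [Submodule.map_smul'', Submodule.map_top, Submodule.range_subtype]
    rw [← e] at h2
    obtain ⟨q, hq, hqe⟩ := h2
    have : q = ⟨_, h3⟩ := Subtype.ext hqe
    rwa [← this]
  have h5 := hc (n i₀) hn _ h4 (by
    apply Subtype.ext
    show (θ v) • G'.mkQ (monomial n f) = 0
    rw [← map_smul, hsm, hφθ, monomial_mul]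
    refine (Submodule.Quotient.mk_eq_zero _).2 ?_
    rw [mG']
    intro m
    rw [coeff_monomial]
    split_ifs with h
    · rw [← h, add_comm]; exact hxf
    · exact Ideal.zero_mem _)
  have h6 : G'.mkQ (monomial n f) = 0 := congrArg Subtype.val h5
  have h7 := (mG' _).1 ((Submodule.Quotient.mk_eq_zero _).1 h6) n
  rwa [coeff_monomial, if_pos rfl] at h7

end PartB

section PartC

variable {s : ℕ}

/-- difference in direction `u` -/
def dv (u : Fin s → ℤ) (f : (Fin s → ℤ) → ℤ) : (Fin s → ℤ) → ℤ := fun n => f (n + u) - f n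

/-- polynomial functions of degree at most `d` -/
def Dg : ℕ → ((Fin s → ℤ) → ℤ) → Prop
  | 0, f => ∀ n m, f n = f m
  | d + 1, f => ∀ u, Dg d (dv u f)

lemma Dg.const (d : ℕ) (c : ℤ) : Dg (s := s) d (fun _ => c) := by
  induction d generalizing c with
  | zero => intro _ _; rfl
  | succ d ih =>
    intro u
    have h : dv u (fun _ : Fin s → ℤ => c) = fun _ => 0 := by funext n; simp [dv]
    rw [h]; exact ih 0

lemma Dg.succ {d : ℕ} : ∀ {f : (Fin s → ℤ) → ℤ}, Dg d f → Dg (d + 1) f := by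
  induction d with
  | zero =>
    intro f hf u n m
    simp only [dv]
    rw [hf (n + u) n, hf (m + u) m]; simp
  | succ d ih => intro f hf u; exact ih (hf u)

lemma Dg.mono {d e : ℕ} (h : d ≤ e) {f : (Fin s → ℤ) → ℤ} (hf : Dg d f) : Dg e f := by
  induction h with
  | refl => exact hf
  | step _ ih => exact ih.succ

lemma Dg.add {d : ℕ} : ∀ {f g : (Fin s → ℤ) → ℤ}, Dg d f → Dg d g → Dg d (fun n => f n + g n) := by
  induction d with
  | zero => intro f g hf hg n m; simp only; rw [hf n m, hg n m]
  | succ d ih =>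
    intro f g hf hg u
    have := ih (hf u) (hg u)
    convert this using 1
    funext n; simp only [dv]; ring

lemma Dg.smul {d : ℕ} (c : ℤ) : ∀ {f : (Fin s → ℤ) → ℤ}, Dg d f → Dg d (fun n => c * f n) := by
  induction d with
  | zero => intro f hf n m; simp only; rw [hf n m]
  | succ d ih =>
    intro f hf u
    have := ih (hf u)
    convert this using 1
    funext n; simp only [dv]; ring

lemma Dg.of_smul {d : ℕ} {c : ℤ} (hc : c ≠ 0) :
    ∀ {f : (Fin s → ℤ) → ℤ}, Dg d (fun n => c * f n) → Dg d f := by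
  induction d with
  | zero => intro f hf n m; exact mul_left_cancel₀ hc (hf n m)
  | succ d ih =>
    intro f hf u
    apply ih
    have := hf u
    convert this using 1
    funext n; simp only [dv]; ring

lemma Dg.shift {d : ℕ} (v : Fin s → ℤ) : ∀ {f : (Fin s → ℤ) → ℤ}, Dg d f → Dg d (fun n => f (n + v)) := by
  induction d with
  | zero => intro f hf n m; exact hf _ _
  | succ d ih =>
    intro f hf u
    have := ih (hf u)
    convert this using 1
    funext n; simp only [dv]; rw [add_right_comm]

lemma Dg.mul : ∀ (k : ℕ) {a b : ℕ} (_ : a + b = k) {f g : (Fin s → ℤ) → ℤ}, Dg a f → Dg b g →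
    Dg (a + b) (fun n => f n * g n) := by
  intro k
  induction k with
  | zero =>
    intro a b h f g hf hg
    obtain rfl : a = 0 := by omega
    obtain rfl : b = 0 := by omega
    intro n m; simp only; rw [hf n m, hg n m]
  | succ k ih =>
    intro a b h f g hf hg
    rcases a with _ | a
    · have h1 : (fun n => f n * g n) = fun n => f 0 * g n := by
        funext n; rw [hf n 0]
      rw [h1, Nat.zero_add]
      exact hg.smul _
    rcases b with _ | b
    · have h1 : (fun n => f n * g n) = fun n => g 0 * f n := by
        funext n; rw [hg n 0, mul_comm]
      rw [h1]
      exact hf.smul _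
    intro u
    have h1 : dv u (fun n => f n * g n) =
        fun n => dv u f n * g (n + u) + f n * dv u g n := by
      funext n; simp only [dv]; ring
    rw [h1]
    have h2 := ih (by omega) (hf u) (Dg.shift u hg)
    have h3 := ih (by omega) hf (hg u)
    have e : a + 1 + b = a + (b + 1) := by ring
    rw [← e] at h2
    exact h2.add h3

lemma Dg.prod {ι : Type*} (t : Finset ι) (d : ι → ℕ) (f : ι → (Fin s → ℤ) → ℤ)
    (h : ∀ i ∈ t, Dg (d i) (f i)) : Dg (∑ i ∈ t, d i) (fun n => ∏ i ∈ t, f i n) := by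
  classical
  induction t using Finset.induction_on with
  | empty => simpa using Dg.const 0 1
  | insert a t ha ih =>
    simp only [Finset.prod_insert ha, Finset.sum_insert ha]
    exact Dg.mul _ rfl (h a (Finset.mem_insert_self _ _))
      (ih fun i hi => h i (Finset.mem_insert_of_mem hi))

lemma Dg.sum {ι : Type*} (t : Finset ι) (d : ℕ) (f : ι → (Fin s → ℤ) → ℤ)
    (h : ∀ i ∈ t, Dg d (f i)) : Dg d (fun n => ∑ i ∈ t, f i n) := by
  classical
  induction t using Finset.induction_on with
  | empty => simpa using Dg.const d 0
  | insert a t ha ih =>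
    simp only [Finset.sum_insert ha]
    exact (h a (Finset.mem_insert_self _ _)).add
      (ih fun i hi => h i (Finset.mem_insert_of_mem hi))

lemma Dg.lin (i : Fin s) (c : ℤ) : Dg 1 (fun n : Fin s → ℤ => n i + c) := by
  intro u n m; simp [dv]

lemma Dg.choose (i : Fin s) (a : Fin 3) :
    Dg (a : ℕ) (fun n : Fin s → ℤ => Ring.choose (n i + ((a : ℕ) : ℤ) - 1) (a : ℕ)) := by
  fin_cases a
  · simpa using Dg.const 0 1
  · simpa using Dg.lin i 0
  · have h2 : ∀ r : ℤ, 2 * Ring.choose r 2 = r * (r - 1) := by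
      intro r
      have := Ring.descPochhammer_eq_factorial_smul_choose r 2
      rw [← Polynomial.eval_eq_smeval] at this
      simp [descPochhammer_succ_right, Nat.factorial] at this
      linarith
    apply Dg.of_smul (c := 2) two_ne_zero
    have h3 := Dg.mul 2 rfl (Dg.lin i 1) (Dg.lin i 0)
    convert h3 using 1
    funext n
    have := h2 (n i + 1)
    simp only [Nat.cast_ofNat]
    rw [show n i + 2 - 1 = n i + 1 by ring, this]
    ring

lemma hilbPoly_Dg (c : (Fin s → ℕ) → ℤ) : Dg 2 (hilbPoly s 2 c) := by
  unfold hilbPoly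
  apply Dg.sum
  intro α hα
  rw [Finset.mem_filter] at hα
  apply Dg.smul
  exact (Dg.prod Finset.univ (fun i => (α i : ℕ)) _ (fun i _ => Dg.choose i (α i))).mono hα.2

end PartC

section PartD

variable {R : Type*} [CommRing R] {s : ℕ} {I : Fin s → Ideal R}

/-- ideals whose radical contains the maximal ideal -/
lemma mrad_prod [IsLocalRing R] {ι : Type*} (t : Finset ι) (K : ι → Ideal R)
    (hK : ∀ i ∈ t, maximalIdeal R ≤ (K i).radical) :
    maximalIdeal R ≤ (∏ i ∈ t, K i).radical := by
  classical
  induction t using Finset.induction_on with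
  | empty => simp [Ideal.one_eq_top, Ideal.radical_top]
  | insert a t ha ih =>
    rw [Finset.prod_insert ha, Ideal.radical_mul]
    exact le_inf (hK a (Finset.mem_insert_self _ _))
      (ih fun i hi => hK i (Finset.mem_insert_of_mem hi))

lemma mrad_pow [IsLocalRing R] (K : Ideal R) (n : ℕ)
    (hK : maximalIdeal R ≤ K.radical) : maximalIdeal R ≤ (K ^ n).radical := by
  rcases Nat.eq_zero_or_pos n with rfl | h
  · simp [Ideal.one_eq_top, Ideal.radical_top]
  · rwa [Ideal.radical_pow _ h.ne']

lemma lq_fin_of_rad [IsLocalRing R] [IsNoetherianRing R] (K : Ideal R)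
    (hK : maximalIdeal R ≤ K.radical) : lq K ≠ ⊤ := by
  obtain ⟨k, hk⟩ := Ideal.exists_pow_le_of_le_radical_of_fg hK (IsNoetherian.noetherian _)
  exact lq_finite k hk

lemma prodPow_rad [IsLocalRing R] (hI : ∀ i, IsMPrimary R (I i)) (n : Fin s → ℤ) :
    maximalIdeal R ≤ (prodPow I n).radical :=
  mrad_prod _ _ fun i _ => mrad_pow _ _ (hI i).2

lemma F_rad [IsLocalRing R] (hI : ∀ i, IsMPrimary R (I i)) (F : AdmissibleFiltration R s I)
    (n : Fin s → ℤ) : maximalIdeal R ≤ (F.F n).radical :=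
  (prodPow_rad hI n).trans (Ideal.radical_mono (F.prodPow_le n))

lemma F_fin [IsLocalRing R] [IsNoetherianRing R] (hI : ∀ i, IsMPrimary R (I i))
    (F : AdmissibleFiltration R s I) (n : Fin s → ℤ) : lq (F.F n) ≠ ⊤ :=
  lq_fin_of_rad _ (F_rad hI F n)

lemma prodPow_zero : prodPow I 0 = ⊤ := by
  simp [prodPow, Ideal.one_eq_top]

lemma F_zero (F : AdmissibleFiltration R s I) : F.F 0 = ⊤ :=
  top_le_iff.1 (prodPow_zero (I := I) ▸ F.prodPow_le 0)

lemma prodPow_add {a b : Fin s → ℤ} (ha : 0 ≤ a) (hb : 0 ≤ b) :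
    prodPow I (a + b) = prodPow I a * prodPow I b := by
  unfold prodPow
  rw [← Finset.prod_mul_distrib]
  refine Finset.prod_congr rfl fun i _ => ?_
  rw [← pow_add, Pi.add_apply, Int.toNat_add (ha i) (hb i)]

lemma prodPow_single (i : Fin s) (p : ℕ) : prodPow I (Pi.single i (p : ℤ)) = I i ^ p := by
  unfold prodPow
  rw [Finset.prod_eq_single i]
  · simp
  · intro j _ hj; simp [Pi.single_eq_of_ne hj]
  · simp

lemma prodPow_evec : prodPow I (evec s) = ∏ i, I i := by
  simp [prodPow, evec]

lemma single_nonneg (i : Fin s) : (0 : Fin s → ℤ) ≤ Pi.single i (1 : ℤ) :=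
  Pi.single_nonneg.2 zero_le_one

lemma evec_nonneg : (0 : Fin s → ℤ) ≤ evec s := fun _ => zero_le_one

lemma I_le (F : AdmissibleFiltration R s I) (i : Fin s) : I i ≤ F.F (Pi.single i 1) := by
  have := F.prodPow_le (Pi.single i 1)
  have h := prodPow_single (I := I) i 1
  rw [pow_one, Nat.cast_one] at h
  rwa [h] at this

lemma I_mul (F : AdmissibleFiltration R s I) (i : Fin s) (n : Fin s → ℤ) :
    I i * F.F n ≤ F.F (n + Pi.single i 1) := by
  rw [add_comm]
  exact (Ideal.mul_mono_left (I_le F i)).trans (F.mul_le _ _)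

lemma F_mul_mem (F : AdmissibleFiltration R s I) {m n k : Fin s → ℤ} (h : k ≤ m + n) {a b : R}
    (ha : a ∈ F.F m) (hb : b ∈ F.F n) : a * b ∈ F.F k :=
  F.antitone _ _ h (F.mul_le m n (Ideal.mul_mem_mul ha hb))

lemma adm_large (F : AdmissibleFiltration R s I) : ∃ N : ℕ, ∀ n : Fin s → ℤ, (∀ i, (N : ℤ) ≤ n i) →
    ∀ a : Fin s → ℤ, 0 ≤ a → F.F (n + a) = prodPow I a * F.F n := by
  obtain ⟨m, hm, h⟩ := F.admissible
  refine ⟨∑ i, (m i).toNat, fun n hn a ha => ?_⟩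
  have hmn : 0 ≤ n - m := by
    intro i
    have h1 : (m i).toNat ≤ ∑ i, (m i).toNat :=
      Finset.single_le_sum (f := fun i => (m i).toNat) (fun _ _ => Nat.zero_le _) (Finset.mem_univ i)
    have h2 := hn i
    simp only [Pi.zero_apply, Pi.sub_apply]
    omega
  have e1 := h (n - m + a) (add_nonneg hmn ha)
  have e2 := h (n - m) hmn
  rw [show n - m + a + m = n + a by abel, prodPow_add hmn ha] at e1
  rw [sub_add_cancel] at e2
  rw [e1, e2, ← mul_assoc, mul_comm (prodPow I a)]

lemma F_pow (F : AdmissibleFiltration R s I) (k : ℕ) : F.F (evec s) ^ k ≤ F.F (k • evec s) := by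
  induction k with
  | zero => simp [F_zero]
  | succ k ih =>
    rw [pow_succ, succ_nsmul]
    exact (Ideal.mul_mono_left ih).trans (F.mul_le _ _)

lemma rr_mem {F : AdmissibleFiltration R s I} (hv : H1ReesVanishes F) {n : Fin s → ℤ} (hn : 0 ≤ n)
    (k : ℕ) {r : R}
    (h : ∀ f ∈ F.F ((k + 1) • evec s), r * f ∈ F.F (n + (k + 1) • evec s)) : r ∈ F.F n := by
  rw [← hv n hn]
  refine (le_iSup (fun k : ℕ => (F.F (n + ((k + 1) : ℕ) • evec s)).colon
    ((F.F (evec s) ^ (k + 1) : Ideal R) : Set R)) k) ?_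
  rw [Submodule.mem_colon]
  intro f hf
  exact h f (F_pow F _ hf)

lemma hilb_eq (F : AdmissibleFiltration R s I) (n : Fin s → ℤ) :
    hilbFn F n = ((lq (F.F n)).toNat : ℤ) := lenI_eq _

lemma cr_span (x : Fin s → Fin 2 → R) :
    crIdeal x = Ideal.span {∏ i, x i 0, ∏ i, x i 1} := by
  unfold crIdeal
  congr 1
  ext z
  simp [eq_comm]

lemma prod_mem_e (F : AdmissibleFiltration R s I) (x : Fin s → R) (hx : ∀ i, x i ∈ I i) :
    ∏ i, x i ∈ F.F (evec s) := by
  apply F.prodPow_le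
  rw [prodPow_evec]
  exact Ideal.prod_mem_prod fun i _ => hx i

lemma cr_le {F : AdmissibleFiltration R s I} {x : Fin s → Fin 2 → R}
    (hx : ∀ i j, x i j ∈ I i) : crIdeal x ≤ F.F (evec s) := by
  unfold crIdeal
  rw [Ideal.span_le]
  rintro _ ⟨j, rfl⟩
  exact prod_mem_e F (fun i => x i j) fun i => hx i j

lemma cr_mul_le {F : AdmissibleFiltration R s I} {x : Fin s → Fin 2 → R}
    (hx : ∀ i j, x i j ∈ I i) (n : Fin s → ℤ) : crIdeal x * F.F n ≤ F.F (n + evec s) := by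
  rw [add_comm]
  exact (Ideal.mul_mono_left (cr_le hx)).trans (F.mul_le _ _)

lemma cr_colon {F : AdmissibleFiltration R s I} (hv : H1ReesVanishes F) {x : Fin s → Fin 2 → R}
    (hx : IsCompleteReduction F x) {n : Fin s → ℤ} (hn : 0 ≤ n) :
    (F.F (n + evec s)).colon (crIdeal x : Set R) = F.F n := by
  obtain ⟨hx, N, hN⟩ := hx
  apply le_antisymm
  · intro r hr
    rw [Submodule.mem_colon] at hr
    apply rr_mem hv hn N
    have h1 := hN (N • evec s) (by intro i; simp [evec])
    rw [← succ_nsmul] at h1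
    rw [← h1]
    intro f hf
    refine Submodule.mul_induction_on hf ?_ ?_
    · intro a ha b hb
      rw [← mul_assoc]
      refine F_mul_mem F (le_of_eq ?_) (hr a ha) hb
      rw [succ_nsmul]; abel
    · intro a b ha hb
      rw [mul_add]; exact add_mem ha hb
  · intro r hr
    rw [Submodule.mem_colon]
    intro a ha
    exact F_mul_mem F le_rfl hr (cr_le hx ha)

lemma cr_rad [IsLocalRing R] (hI : ∀ i, IsMPrimary R (I i)) {F : AdmissibleFiltration R s I}
    {x : Fin s → Fin 2 → R} (hx : IsCompleteReduction F x) :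
    maximalIdeal R ≤ (crIdeal x).radical := by
  obtain ⟨hx, N, hN⟩ := hx
  have h1 := hN (fun _ => N) (fun _ => le_rfl)
  refine (F_rad hI F _).trans (Ideal.radical_mono (h1.symm.le.trans ?_))
  exact Ideal.mul_le_left

lemma cr_ne_top [IsLocalRing R] (hI : ∀ i, IsMPrimary R (I i)) (hs : 0 < s)
    {x : Fin s → Fin 2 → R} (hx : ∀ i j, x i j ∈ I i) :
    crIdeal x ≤ maximalIdeal R := by
  unfold crIdeal
  rw [Ideal.span_le]
  rintro _ ⟨j, rfl⟩
  exact IsLocalRing.le_maximalIdeal (hI ⟨0, hs⟩).1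
    (Ideal.mem_of_dvd _ (Finset.dvd_prod_of_mem (fun i => x i j) (Finset.mem_univ ⟨0, hs⟩)) (hx _ _))

lemma cr_pos [IsLocalRing R] [IsNoetherianRing R] (hI : ∀ i, IsMPrimary R (I i)) (hs : 0 < s)
    {F : AdmissibleFiltration R s I} {x : Fin s → Fin 2 → R} (hx : IsCompleteReduction F x) :
    1 ≤ ((lq (crIdeal x)).toNat : ℤ) := by
  have h1 := lq_fin_of_rad _ (cr_rad hI hx)
  have h2 : lq (crIdeal x) ≠ 0 := by
    unfold lq
    rw [Ne, Module.length_eq_zero_iff, Ideal.Quotient.subsingleton_iff]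
    intro h
    have := cr_ne_top hI hs hx.1
    rw [h, top_le_iff] at this
    exact (maximalIdeal.isMaximal R).ne_top this
  have h3 : (lq (crIdeal x)).toNat ≠ 0 := by
    rw [Ne, ENat.toNat_eq_zero]; tauto
  omega

lemma cr_kos [IsLocalRing R] [IsNoetherianRing R] (hdim : ringKrullDim R = 2) (hCM : IsCMLocal R)
    (y₁ y₂ : R) (hJ : maximalIdeal R ≤ (Ideal.span {y₁, y₂} : Ideal R).radical) : Kos y₁ y₂ := by
  obtain ⟨rs, hm, hreg, hlen⟩ := hCM
  rw [hdim] at hlen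
  have h2 : rs.length = 2 := by exact_mod_cast hlen
  obtain ⟨a, b, rfl⟩ := List.length_eq_two.1 h2
  have hw := hreg.toIsWeaklyRegular
  rw [RingTheory.Sequence.isWeaklyRegular_cons_iff, RingTheory.Sequence.isWeaklyRegular_cons_iff] at hw
  obtain ⟨ha, hb, -⟩ := hw
  obtain ⟨n, hn⟩ := Ideal.exists_pow_le_of_le_radical_of_fg hJ (IsNoetherian.noetherian _)
  refine kos_of_reg a b ?_ ?_ y₁ y₂ n (hn (Ideal.pow_mem_pow (hm a (by simp)) n))
    (hn (Ideal.pow_mem_pow (hm b (by simp)) n))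
  · exact isSMulRegular_iff_right_eq_zero_of_smul.1 ha
  · intro r c h
    have := (isSMulRegular_quotient_iff_mem_of_smul_mem _ _).1 hb r (by
      rw [Submodule.mem_smul_pointwise_iff_exists]
      exact ⟨c, trivial, h.symm⟩)
    rw [Submodule.mem_smul_pointwise_iff_exists] at this
    obtain ⟨d, -, hd⟩ := this
    exact ⟨d, hd.symm⟩

lemma huneke_id [IsLocalRing R] [IsNoetherianRing R] (hdim : ringKrullDim R = 2) (hCM : IsCMLocal R)
    (hI : ∀ i, IsMPrimary R (I i)) {F : AdmissibleFiltration R s I} (hv : H1ReesVanishes F)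
    {x : Fin s → Fin 2 → R} (hx : IsCompleteReduction F x) {n : Fin s → ℤ} (hn : 0 ≤ n) :
    ((lq (crIdeal x * F.F (n + evec s))).toNat : ℤ) =
      (lq (crIdeal x)).toNat + 2 * hilbFn F (n + evec s) - hilbFn F n := by
  have hr := cr_rad hI hx
  have hc := cr_colon hv hx hn
  have hfin : lq (crIdeal x * F.F (n + evec s)) ≠ ⊤ := by
    apply lq_fin_of_rad
    rw [Ideal.radical_mul]
    exact le_inf hr (F_rad hI F _)
  rw [hilb_eq, hilb_eq, ← hc]
  rw [cr_span] at *
  exact huneke (cr_kos hdim hCM _ _ hr) _ hfin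

end PartD

section PartE

variable {R : Type*} [CommRing R] {s : ℕ} {I : Fin s → Ideal R}

lemma prodPow_nsmul {w : Fin s → ℤ} (hw : 0 ≤ w) (p : ℕ) :
    prodPow I (p • w) = prodPow I w ^ p := by
  induction p with
  | zero => simp [prodPow_zero, Ideal.one_eq_top]
  | succ p ih => rw [succ_nsmul, prodPow_add (nsmul_nonneg hw p) hw, ih, pow_succ]

lemma prodPow_le_max [IsLocalRing R] (hI : ∀ i, IsMPrimary R (I i)) {w : Fin s → ℤ} {j : Fin s}
    (hj : w j = 1) : prodPow I w ≤ maximalIdeal R := by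
  unfold prodPow
  refine (Ideal.prod_le_inf).trans ((Finset.inf_le (Finset.mem_univ j)).trans ?_)
  rw [hj]
  simpa using IsLocalRing.le_maximalIdeal (hI j).1

lemma hilb_anti [IsLocalRing R] [IsNoetherianRing R] (hI : ∀ i, IsMPrimary R (I i))
    (F : AdmissibleFiltration R s I) {a b : Fin s → ℤ} (h : F.F a ≤ F.F b) :
    hilbFn F b ≤ hilbFn F a := by
  rw [hilb_eq, hilb_eq]
  exact_mod_cast ENat.toNat_le_toNat (lq_anti h) (F_fin hI F a)

lemma bound_le [IsLocalRing R] [IsNoetherianRing R] (hI : ∀ i, IsMPrimary R (I i))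
    (F : AdmissibleFiltration R s I) {P : (Fin s → ℤ) → ℤ} (hP : Dg 2 P) (N : ℕ)
    (hN : ∀ n : Fin s → ℤ, (∀ i, (N : ℤ) ≤ n i) → P n = hilbFn F n)
    {w w' : Fin s → ℤ} (hw : 0 ≤ w) (hw' : 0 ≤ w') {j : Fin s} (hj : w' j = 1)
    (h0 : ∀ n, dv w (dv w' P) n = 0) (n₀ : Fin s → ℤ) : dv w (dv w P) n₀ ≤ 0 := by
  by_contra hD
  push Not at hD
  obtain ⟨N₁, hN₁⟩ := adm_large F
  obtain ⟨p, hp⟩ := Ideal.exists_pow_le_of_le_radical_of_fg (prodPow_rad hI w) (IsNoetherian.noetherian _)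
  have hp' : prodPow I (p • w') ≤ prodPow I w := by
    rw [prodPow_nsmul hw']
    exact (Ideal.pow_right_mono (prodPow_le_max hI hj) p).trans hp
  set n : Fin s → ℤ := fun _ => (N : ℤ) + N₁ with hn
  have key : ∀ k : ℕ, P (n + k • w + w) ≤ P (n + k • w + p • w') := by
    intro k
    have hk : ∀ i, (N : ℤ) + N₁ ≤ (n + k • w) i := by
      intro i
      have : 0 ≤ (k • w) i := nsmul_nonneg hw k i
      simp only [Pi.add_apply, hn]; linarith
    have hb : ∀ a : Fin s → ℤ, 0 ≤ a → ∀ i, (N : ℤ) ≤ (n + k • w + a) i := by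
      intro a ha i
      have h1 := hk i
      have h2 : 0 ≤ a i := ha i
      rw [Pi.add_apply]; linarith [Int.natCast_nonneg N₁]
    rw [hN _ (hb w hw), hN _ (hb (p • w') (nsmul_nonneg hw' p))]
    apply hilb_anti hI
    have hk' : ∀ i, (N₁ : ℤ) ≤ (n + k • w) i := fun i => by
      linarith [hk i, Int.natCast_nonneg N]
    rw [hN₁ _ hk' _ hw, hN₁ _ hk' _ (nsmul_nonneg hw' p)]
    exact Ideal.mul_mono_left hp'
  have q1 : ∀ k : ℕ, dv w P (n + k • w) = dv w P n + k * dv w (dv w P) n₀ := by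
    intro k
    induction k with
    | zero => simp
    | succ k ih =>
      have h1 : dv w (dv w P) (n + k • w) = dv w (dv w P) n₀ := hP w w _ _
      rw [dv, ih] at h1
      rw [succ_nsmul, ← add_assoc]
      push_cast
      linarith
  have q2 : ∀ (p : ℕ) (m : Fin s → ℤ), dv (p • w') P (m + w) = dv (p • w') P m := by
    intro p m
    induction p with
    | zero => simp [dv]
    | succ p ih =>
      have h1 := h0 (m + p • w')
      simp only [dv] at h1 ih ⊢
      rw [succ_nsmul]
      rw [show m + p • w' + w + w' = m + w + (p • w' + w') by abel,
        show m + p • w' + w = m + w + p • w' by abel,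
        show m + p • w' + w' = m + (p • w' + w') by abel] at h1
      linarith
  have q3 : ∀ k : ℕ, dv (p • w') P (n + k • w) = dv (p • w') P n := by
    intro k
    induction k with
    | zero => simp
    | succ k ih => rw [succ_nsmul, ← add_assoc, q2, ih]
  have h1 := key (dv (p • w') P n - dv w P n + 1).toNat
  have h2 := q1 (dv (p • w') P n - dv w P n + 1).toNat
  have h3 := q3 (dv (p • w') P n - dv w P n + 1).toNat
  have h4 := Int.self_le_toNat (dv (p • w') P n - dv w P n + 1)
  generalize (dv (p • w') P n - dv w P n + 1).toNat = k at *
  have h5 : dv w P (n + k • w) ≤ dv (p • w') P (n + k • w) := by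
    simp only [dv]; linarith
  rw [h2, h3] at h5
  have h6 : (0 : ℤ) ≤ k := Int.natCast_nonneg k
  nlinarith

lemma delta_e [IsLocalRing R] [IsNoetherianRing R] (hdim : ringKrullDim R = 2) (hCM : IsCMLocal R)
    (hI : ∀ i, IsMPrimary R (I i)) {F : AdmissibleFiltration R s I} (hv : H1ReesVanishes F)
    {x : Fin s → Fin 2 → R} (hx : IsCompleteReduction F x)
    {P : (Fin s → ℤ) → ℤ} (hP : Dg 2 P) (N : ℕ)
    (hN : ∀ n : Fin s → ℤ, (∀ i, (N : ℤ) ≤ n i) → P n = hilbFn F n) (n : Fin s → ℤ) :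
    dv (evec s) (dv (evec s) P) n = (lq (crIdeal x)).toNat := by
  obtain ⟨N', hN'⟩ := hx.2
  set m : Fin s → ℤ := fun _ => (N : ℤ) + N' with hm
  rw [hP (evec s) (evec s) n m]
  have h := huneke_id hdim hCM hI hv hx (n := m) (fun i => by simp only [hm, Pi.zero_apply]; positivity)
  rw [hN' _ (fun i => by simp [hm, evec]; omega), ← hilb_eq,
    ← hN _ (fun i => by simp [hm, evec]; omega), ← hN _ (fun i => by simp [hm, evec]; omega),
    ← hN _ (fun i => by simp [hm])] at h
  simp only [dv]
  linarith

lemma one_imp_two [IsLocalRing R] [IsNoetherianRing R] (hdim : ringKrullDim R = 2) (hCM : IsCMLocal R)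
    (hI : ∀ i, IsMPrimary R (I i)) {F : AdmissibleFiltration R s I} (hv : H1ReesVanishes F)
    {x : Fin s → Fin 2 → R} (hx : IsCompleteReduction F x)
    {P : (Fin s → ℤ) → ℤ} (hP : Dg 2 P)
    (hN : ∀ n : Fin s → ℤ, 0 ≤ n → P n = hilbFn F n) : crNumber F x ≤ 1 := by
  apply Nat.sInf_le
  intro n hn
  obtain ⟨m, rfl⟩ : ∃ m, n = m + evec s := ⟨n - evec s, by abel⟩
  have hm : 0 ≤ m := by
    intro i
    have := hn i
    simp [evec] at this
    exact this
  have h := huneke_id hdim hCM hI hv hx hm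
  have h2 := delta_e hdim hCM hI hv hx hP 0 (fun n hn => hN n fun i => by simpa using hn i) m
  simp only [dv] at h2
  rw [hN _ (add_nonneg (add_nonneg hm evec_nonneg) evec_nonneg), hN _ (add_nonneg hm evec_nonneg),
    hN _ hm] at h2
  have h3 : ((lq (crIdeal x * F.F (m + evec s))).toNat : ℤ) =
      (lq (F.F (m + evec s + evec s))).toNat := by
    rw [h, ← hilb_eq]; linarith
  have hfin : lq (crIdeal x * F.F (m + evec s)) ≠ ⊤ := by
    apply lq_fin_of_rad
    rw [Ideal.radical_mul]
    exact le_inf (cr_rad hI hx) (F_rad hI F _)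
  apply lq_eq_imp (cr_mul_le hx.1 _) hfin
  rw [← ENat.natCast_toNat hfin, ← ENat.natCast_toNat (F_fin hI F (m + evec s + evec s))]
  exact_mod_cast h3

lemma seq_zero (g : ℕ → ℤ) (h : ∀ k, g (k + 2) - 2 * g (k + 1) + g k = 0) (K : ℕ)
    (hK : ∀ k, K ≤ k → g k = 0) : g 0 = 0 := by
  induction K with
  | zero => exact hK 0 le_rfl
  | succ K ih =>
    apply ih
    intro k hk
    have := h k
    rw [hK (k + 2) (by omega), hK (k + 1) (by omega)] at this
    linarith

lemma two_imp_one [IsLocalRing R] [IsNoetherianRing R] (hdim : ringKrullDim R = 2) (hCM : IsCMLocal R)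
    (hI : ∀ i, IsMPrimary R (I i)) {F : AdmissibleFiltration R s I} (hv : H1ReesVanishes F)
    {x : Fin s → Fin 2 → R} (hx : IsCompleteReduction F x) (hr : crNumber F x ≤ 1)
    {P : (Fin s → ℤ) → ℤ} (hP : Dg 2 P) (N : ℕ)
    (hN : ∀ n : Fin s → ℤ, (∀ i, (N : ℤ) ≤ n i) → P n = hilbFn F n)
    (n : Fin s → ℤ) (hn : 0 ≤ n) : hilbFn F n = P n := by
  have hmem : crNumber F x ∈ {k : ℕ | ∀ n : Fin s → ℤ, (∀ i, (k : ℤ) ≤ n i) →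
    crIdeal x * F.F n = F.F (n + evec s)} := Nat.sInf_mem hx.2
  have h1 : ∀ n : Fin s → ℤ, 0 ≤ n →
      crIdeal x * F.F (n + evec s) = F.F (n + evec s + evec s) := by
    intro n hn
    apply hmem
    intro i
    have h1 : 0 ≤ n i := hn i
    simp only [Pi.add_apply, evec]
    omega
  have := seq_zero (fun k => hilbFn F (n + k • evec s) - P (n + k • evec s)) ?_ N ?_
  · simp only [zero_smul, add_zero] at this
    linarith
  · intro k
    have hk : 0 ≤ n + k • evec s := add_nonneg hn (nsmul_nonneg evec_nonneg k)
    have h2 := huneke_id hdim hCM hI hv hx hk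
    have h3 := delta_e hdim hCM hI hv hx hP N hN (n + k • evec s)
    rw [h1 _ hk, ← hilb_eq] at h2
    simp only [dv] at h3
    have e1 : n + (k + 1) • evec s = n + k • evec s + evec s := by rw [succ_nsmul]; abel
    have e2 : n + (k + 2) • evec s = n + k • evec s + evec s + evec s := by
      rw [succ_nsmul, succ_nsmul]; abel
    simp only [e1, e2]
    linarith
  · intro k hk
    rw [hN, sub_self]
    intro i
    have : 0 ≤ n i := hn i
    simp [evec]
    omega

lemma post_sub [IsLocalRing R] [IsNoetherianRing R] (hs : 2 ≤ s) (hdim : ringKrullDim R = 2)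
    (hCM : IsCMLocal R)
    (hI : ∀ i, IsMPrimary R (I i)) {F : AdmissibleFiltration R s I} (hv : H1ReesVanishes F)
    {x : Fin s → Fin 2 → R} (hx : IsCompleteReduction F x)
    {P : (Fin s → ℤ) → ℤ} (hP : Dg 2 P) (N : ℕ)
    (hN : ∀ n : Fin s → ℤ, (∀ i, (N : ℤ) ≤ n i) → P n = hilbFn F n)
    (n : Fin s → ℤ) (hn : ∀ m, n ≤ m → hilbFn F m = P m) : 0 ≤ n := by
  intro i₀
  by_contra hi
  simp only [Pi.zero_apply, not_le] at hi
  set u : Fin s → ℤ := Pi.single i₀ 1 with hu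
  set v : Fin s → ℤ := evec s - u with hvv
  obtain ⟨j, hj⟩ : ∃ j : Fin s, j ≠ i₀ := by
    have : Nontrivial (Fin s) := Fin.nontrivial_iff_two_le.2 hs
    exact exists_ne i₀
  have hu0 : 0 ≤ u := single_nonneg i₀
  have hui : u i₀ = 1 := by simp [hu]
  have huj : ∀ j, j ≠ i₀ → u j = 0 := fun j hj => by simp [hu, hj]
  have hvi : v i₀ = 0 := by simp [hvv, evec, hui]
  have hvj : ∀ j, j ≠ i₀ → v j = 1 := fun j hj => by simp [hvv, evec, huj j hj]
  have hv0 : 0 ≤ v := by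
    intro k
    by_cases hk : k = i₀
    · rw [hk, hvi]; rfl
    · rw [hvj k hk]; exact zero_le_one
  set m : Fin s → ℤ := fun i => if i = i₀ then -1 else max (n i) 0 with hm
  have hnm : n ≤ m := by
    intro k
    by_cases hk : k = i₀
    · subst hk; simp [hm]; omega
    · simp [hm, hk]
  have step : ∀ a : Fin s → ℤ, 0 ≤ a → a i₀ = 0 → P (m + a + u) = P (m + a) := by
    intro a ha ha0
    rw [← hn _ (hnm.trans (le_add_of_nonneg_right ha)),
      ← hn _ (hnm.trans ((le_add_of_nonneg_right ha).trans (le_add_of_nonneg_right hu0)))]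
    unfold hilbFn
    have : F.F (m + a + u) = F.F (m + a) := by
      rw [F.plus_eq, F.plus_eq (m + a)]
      congr 1
      funext k
      by_cases hk : k = i₀
      · subst hk; simp [vplus, hm, ha0, hui]
      · simp [vplus, huj k hk]
    rw [this]
  have huv : ∀ n, dv v (dv u P) n = 0 := by
    intro n
    rw [hP u v n m]
    have h1 := step 0 le_rfl rfl
    have h2 := step v hv0 hvi
    rw [add_zero] at h1
    simp only [dv, h1, h2]
    ring
  have hvu : ∀ n, dv u (dv v P) n = 0 := by
    intro n
    rw [← huv n]
    simp only [dv]
    rw [add_right_comm n u v]; ring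
  have b1 := bound_le hI F hP N hN hv0 hu0 hui huv m
  have b2 := bound_le hI F hP N hN hu0 hv0 (hvj j hj) hvu m
  have b3 := delta_e hdim hCM hI hv hx hP N hN m
  have b4 := cr_pos hI (by omega) hx
  have h1 := huv (m + u)
  have h1' := huv (m + v)
  have h1'' := huv m
  have hPv := hP v v (m+u+u) m
  have he : evec s = u + v := by rw [hvv]; abel
  have hA : dv v (dv v P) (m + u + u) = dv v (dv v P) m := hP v v _ _
  simp only [dv] at b1 b2 b3 h1 h1' h1'' hA
  rw [he] at b3
  have h2 := huv (m + u + v)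
  simp only [dv] at h2
  rw [show m + (u + v) + (u + v) = m + u + u + v + v by abel,
    show m + (u + v) = m + u + v by abel] at b3
  rw [show m + u + v + v + u = m + u + u + v + v by abel,
    show m + u + v + u = m + u + u + v by abel] at h2
  rw [show m + u + v + u = m + u + u + v by abel] at h1
  rw [show m + v + v + u = m + u + v + v by abel, show m + v + u = m + u + v by abel] at h1'
  rw [show m + v + u = m + u + v by abel] at h1''
  linarith

end PartE

section PartF

variable {R : Type*} [CommRing R] {s : ℕ} {I : Fin s → Ideal R}

lemma sup_filt [IsLocalRing R] [IsNoetherianRing R] [Infinite (IsLocalRing.ResidueField R)]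
    (F : AdmissibleFiltration R s I) (y : R) (i : Fin s) :
    ∃ x ∈ I i, ∃ N : ℕ, ∀ n : Fin s → ℤ, (∀ i, (N : ℤ) ≤ n i) → ∀ f ∈ F.F n,
      x * f ∈ F.F (n + Pi.single i 1 + evec s) ⊔ Ideal.span {y} →
      f ∈ F.F (n + evec s) ⊔ Ideal.span {y} := by
  obtain ⟨N₀, hN₀⟩ := adm_large F
  let m₀ : Fin s → ℤ := fun _ => N₀
  let G : (Fin s →₀ ℕ) → Ideal R := fun k =>
    F.F (m₀ + (fun i => (k i : ℤ)) + evec s) ⊔ Ideal.span {y}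
  have hco : ∀ (k : Fin s →₀ ℕ) (i : Fin s), (fun j => (((k + Finsupp.single i 1 : Fin s →₀ ℕ) j : ℕ) : ℤ)) =
      (fun j => (k j : ℤ)) + Pi.single i 1 := by
    intro k i
    funext j
    by_cases hj : j = i
    · subst hj; simp
    · simp [hj, Finsupp.single_eq_of_ne hj]
  have hG : ∀ i n, I i * G n ≤ G (n + Finsupp.single i 1) := by
    intro i k
    simp only [G]
    rw [Ideal.mul_sup, hco]
    refine sup_le_sup ?_ Ideal.mul_le_right
    refine (I_mul F i _).trans (le_of_eq ?_)
    congr 1; abel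
  obtain ⟨x, hx, c, hc⟩ := superficial I (F.F m₀) G hG i
  refine ⟨x, hx, N₀ + c, fun n hn f hf hxf => ?_⟩
  let k : Fin s →₀ ℕ := Finsupp.equivFunOnFinite.symm fun j => (n j - N₀).toNat
  have hk : ∀ j, (k j : ℤ) = n j - N₀ := by
    intro j
    have := hn j
    push_cast at this
    simp only [k, Finsupp.equivFunOnFinite_symm_apply_apply]
    omega
  have hnk : m₀ + (fun i => (k i : ℤ)) = n := by
    funext j; simp [m₀, hk]
  have h1 : f ∈ (∏ i, I i ^ (k i)) * F.F m₀ := by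
    have h2 := hN₀ m₀ (fun _ => le_rfl) (fun i => (k i : ℤ)) (fun i => Int.natCast_nonneg _)
    rw [hnk] at h2
    rw [h2] at hf
    simpa [prodPow] using hf
  have h3 := hc k (by
    have h4 := hn i
    have h5 := hk i
    push_cast at h4; omega) f h1
  simp only [G] at h3
  rw [hco, ← add_assoc, hnk] at h3
  exact h3 hxf

lemma cancel_one {F : AdmissibleFiltration R s I} (hv : H1ReesVanishes F) {i : Fin s} {x : R} {N : ℕ}
    (h : ∀ n : Fin s → ℤ, (∀ i, (N : ℤ) ≤ n i) → ∀ f ∈ F.F n,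
      x * f ∈ F.F (n + Pi.single i 1 + evec s) → f ∈ F.F (n + evec s))
    {n : Fin s → ℤ} (hn : 0 ≤ n) {r : R} (hr : x * r ∈ F.F (n + Pi.single i 1)) : r ∈ F.F n := by
  set p : ℕ := ∑ i, (n i).toNat with hp
  have hnp : n ≤ p • evec s := by
    intro i
    have h1 : (n i).toNat ≤ ∑ i, (n i).toNat :=
      Finset.single_le_sum (f := fun i => (n i).toNat) (fun _ _ => Nat.zero_le _) (Finset.mem_univ i)
    simp [evec]
    omega
  apply rr_mem hv hn (N + p)
  intro f hf
  have climb : ∀ t ≤ p, r * f ∈ F.F (n + (N + 1 + t) • evec s) := by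
    intro t
    induction t with
    | zero =>
      intro _
      refine Ideal.mul_mem_left _ _ (F.antitone _ _ ?_ hf)
      intro j
      have := hnp j
      simp [evec] at this ⊢
      linarith
    | succ t ih =>
      intro ht
      have h1 := h (n + (N + 1 + t) • evec s) (by
        intro j
        have : 0 ≤ n j := hn j
        simp [evec]
        linarith) (r * f) (ih (by omega)) (by
        rw [← mul_assoc]
        refine F_mul_mem F ?_ hr hf
        intro j
        simp [evec]
        have : (t : ℤ) + 1 ≤ p := by exact_mod_cast ht
        linarith)
      rw [← add_assoc (N + 1), succ_nsmul, ← add_assoc]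
      exact h1
  have h1 := climb p le_rfl
  rwa [show N + 1 + p = N + p + 1 by ring] at h1

lemma sum_single : ∑ i : Fin s, (Pi.single i 1 : Fin s → ℤ) = evec s := by
  funext j
  rw [Finset.sum_apply]
  simp [evec, Pi.single_apply]

lemma cancel_prod {F : AdmissibleFiltration R s I} (x : Fin s → R)
    (h : ∀ i (n : Fin s → ℤ), 0 ≤ n → ∀ r, x i * r ∈ F.F (n + Pi.single i 1) → r ∈ F.F n)
    (T : Finset (Fin s)) : ∀ (n : Fin s → ℤ), 0 ≤ n → ∀ r,
      (∏ i ∈ T, x i) * r ∈ F.F (n + ∑ i ∈ T, Pi.single i 1) → r ∈ F.F n := by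
  induction T using Finset.induction_on with
  | empty => intro n _ r hr; simpa using hr
  | insert a T ha ih =>
    intro n hn r hr
    apply ih n hn
    rw [Finset.prod_insert ha, Finset.sum_insert ha, mul_assoc] at hr
    apply h a
    · exact add_nonneg hn (Finset.sum_nonneg fun i _ => single_nonneg i)
    · convert hr using 2; abel

lemma lq_x (A C : Ideal R) (x : R) (hC : lq C ≠ ⊤) (hA : lq A ≠ ⊤) :
    (lq C).toNat + (lq A).toNat =
      (lq (A ⊓ C.colon ({x} : Set R))).toNat + (lq (Ideal.span {x} * A ⊔ C)).toNat := by
  have h1 := lq_colon C x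
  have h2 := lq_modular A (C.colon ({x} : Set R))
  have h3 := lq_colon (Ideal.span {x} * A ⊔ C) x
  have e1 : (Ideal.span {x} * A ⊔ C).colon ({x} : Set R) = A ⊔ C.colon ({x} : Set R) := by
    ext r
    simp only [Submodule.mem_colon_singleton, smul_eq_mul, Submodule.mem_sup,
      Ideal.mem_span_singleton_mul]
    constructor
    · rintro ⟨_, ⟨a, ha, rfl⟩, c, hc, h⟩
      refine ⟨a, ha, r - a, ?_, by ring⟩
      rw [show (r - a) * x = c by rw [sub_mul, ← h]; ring]; exact hc
    · rintro ⟨a, ha, c, hc, rfl⟩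
      exact ⟨_, ⟨a, ha, rfl⟩, c * x, hc, by ring⟩
  have e2 : Ideal.span {x} * A ⊔ C ⊔ Ideal.span {x} = C ⊔ Ideal.span {x} := by
    apply le_antisymm
    · exact sup_le (sup_le (Ideal.mul_le_left.trans le_sup_right) le_sup_left) le_sup_right
    · exact sup_le (le_sup_right.trans le_sup_left) le_sup_right
  rw [e1, e2] at h3
  have f1 : lq (C ⊔ Ideal.span {x}) ≠ ⊤ := ne_top_of_le_ne_top hC (lq_anti le_sup_left)
  have f2 : lq (C.colon ({x} : Set R)) ≠ ⊤ :=
    ne_top_of_le_ne_top hC (h1 ▸ le_self_add)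
  have f3 : lq (A ⊔ C.colon ({x} : Set R)) ≠ ⊤ := ne_top_of_le_ne_top hA (lq_anti le_sup_left)
  have f4 : lq (A ⊓ C.colon ({x} : Set R)) ≠ ⊤ := by
    intro h
    rw [h, top_add] at h2
    exact (ENat.add_lt_top.2 ⟨hA.lt_top, f2.lt_top⟩).ne h2
  rw [h1, h3]
  rw [ENat.toNat_add f2 f1, ENat.toNat_add f3 f1]
  have h4 := congrArg ENat.toNat h2
  rw [ENat.toNat_add hA f2, ENat.toNat_add f4 f3] at h4
  omega

/-- the cancellation property of `y₁` -/
def Canc (F : AdmissibleFiltration R s I) (y : R) : Prop :=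
  y ∈ F.F (evec s) ∧ ∀ (n : Fin s → ℤ), 0 ≤ n → ∀ r, y * r ∈ F.F (n + evec s) → r ∈ F.F n

lemma exists_y1 [IsLocalRing R] [IsNoetherianRing R] [Infinite (IsLocalRing.ResidueField R)]
    {F : AdmissibleFiltration R s I} (hv : H1ReesVanishes F) :
    ∃ x : Fin s → R, (∀ i, x i ∈ I i) ∧ Canc F (∏ i, x i) := by
  have h := fun i => sup_filt F 0 i
  choose x hx N hN using h
  refine ⟨x, hx, prod_mem_e F x hx, ?_⟩
  have h1 := cancel_prod (F := F) x (fun i n hn r hr => cancel_one hv (N := N i) (by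
    simpa using hN i) hn hr) Finset.univ
  rwa [sum_single] at h1

lemma good_of_canc {F : AdmissibleFiltration R s I} {y : R} (hy : Canc F y) (m : Fin s → ℤ)
    (hm : ∀ i, ((1 : ℕ) : ℤ) ≤ m i) :
    F.F m ⊓ Ideal.span {y} = Ideal.span {y} * F.F (m - evec s) := by
  have h0 : 0 ≤ m - evec s := by
    intro i; have := hm i; simp [evec]; simpa using this
  apply le_antisymm
  · rintro f ⟨hf, hf'⟩
    obtain ⟨r, rfl⟩ := Ideal.mem_span_singleton'.1 hf'
    rw [Ideal.mem_span_singleton_mul]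
    refine ⟨r, hy.2 _ h0 r ?_, mul_comm _ _⟩
    rw [sub_add_cancel, mul_comm]; exact hf
  · intro f hf
    obtain ⟨r, hr, rfl⟩ := Ideal.mem_span_singleton_mul.1 hf
    refine ⟨F_mul_mem F (by rw [add_sub_cancel]) hy.1 hr, ?_⟩
    exact Ideal.mul_mem_right _ _ (Ideal.mem_span_singleton_self y)

lemma b_eq [IsLocalRing R] [IsNoetherianRing R] (hI : ∀ i, IsMPrimary R (I i))
    {F : AdmissibleFiltration R s I} {y : R} (hy : Canc F y) {n : Fin s → ℤ} (hn : 0 ≤ n) :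
    ((lq (F.F (n + evec s) ⊔ Ideal.span {y})).toNat : ℤ) = hilbFn F (n + evec s) - hilbFn F n := by
  have h1 := lq_colon (F.F (n + evec s)) y
  have e : (F.F (n + evec s)).colon ({y} : Set R) = F.F n := by
    ext r
    rw [Submodule.mem_colon_singleton, smul_eq_mul, mul_comm]
    exact ⟨hy.2 n hn r, fun hr => F_mul_mem F (by rw [add_comm]) hy.1 hr⟩
  rw [e] at h1
  have f1 : lq (F.F (n + evec s) ⊔ Ideal.span {y}) ≠ ⊤ :=
    ne_top_of_le_ne_top (F_fin hI F _) (lq_anti le_sup_left)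
  have h2 := congrArg ENat.toNat h1
  rw [ENat.toNat_add (F_fin hI F _) f1] at h2
  rw [hilb_eq, hilb_eq, h2]
  push_cast; ring

lemma step_one [IsLocalRing R] [IsNoetherianRing R] (hs : 0 < s) (hI : ∀ i, IsMPrimary R (I i))
    {F : AdmissibleFiltration R s I} {y : R} (hy : Canc F y)
    {P : (Fin s → ℤ) → ℤ} (hP : Dg 2 P) (N : ℕ)
    (hN : ∀ n : Fin s → ℤ, (∀ i, (N : ℤ) ≤ n i) → P n = hilbFn F n)
    {i : Fin s} {x : R} (hxi : x ∈ I i) (N₁ : ℕ)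
    (h : ∀ n : Fin s → ℤ, (∀ i, (N₁ : ℤ) ≤ n i) → ∀ f ∈ F.F n,
      x * f ∈ F.F (n + Pi.single i 1 + evec s) ⊔ Ideal.span {y} →
      f ∈ F.F (n + evec s) ⊔ Ideal.span {y}) :
    ∃ N' : ℕ, ∀ n : Fin s → ℤ, (∀ i, (N' : ℤ) ≤ n i) →
      F.F (n + Pi.single i 1) ≤ Ideal.span {x} * F.F n ⊔ Ideal.span {y} := by
  obtain ⟨N₂, hN₂⟩ := adm_large F
  refine ⟨N + N₁ + N₂ + 1, fun n hn => ?_⟩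
  push_cast at hn
  have hsing : ∀ j, 0 ≤ (Pi.single i 1 : Fin s → ℤ) j := single_nonneg i
  have bdiff : ∀ n : Fin s → ℤ, (∀ i, (N : ℤ) + 1 ≤ n i) →
      ((lq (F.F (n + evec s) ⊔ Ideal.span {y})).toNat : ℤ) -
        (lq (F.F n ⊔ Ideal.span {y})).toNat = dv (evec s) (dv (evec s) P) 0 := by
    intro n hn
    obtain ⟨m, rfl⟩ : ∃ m, n = m + evec s := ⟨n - evec s, by abel⟩
    have hm : ∀ i, (N : ℤ) ≤ m i := fun i => by
      have := hn i
      simp only [Pi.add_apply, evec] at this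
      linarith
    have hm0 : 0 ≤ m := fun i => (Int.natCast_nonneg N).trans (hm i)
    rw [b_eq hI hy hm0, b_eq hI hy (add_nonneg hm0 evec_nonneg), hP (evec s) (evec s) 0 m]
    rw [← hN _ hm, ← hN (m + evec s) (fun i => (hm i).trans (by simp [evec])),
      ← hN (m + evec s + evec s) (fun i => (hm i).trans (by simp [evec]; omega))]
    rfl
  set A := F.F n ⊔ Ideal.span {y} with hA
  set C := F.F (n + Pi.single i 1 + evec s) ⊔ Ideal.span {y} with hC
  set D := F.F (n + Pi.single i 1) ⊔ Ideal.span {y} with hD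
  have fA : lq A ≠ ⊤ := ne_top_of_le_ne_top (F_fin hI F _) (lq_anti le_sup_left)
  have fC : lq C ≠ ⊤ := ne_top_of_le_ne_top (F_fin hI F _) (lq_anti le_sup_left)
  have fD : lq D ≠ ⊤ := ne_top_of_le_ne_top (F_fin hI F _) (lq_anti le_sup_left)
  have hx1 : ∀ n, ∀ f ∈ F.F n, x * f ∈ F.F (n + Pi.single i 1) := fun n f hf =>
    I_mul F i n (Ideal.mul_mem_mul hxi hf)
  have e1 : A ⊓ C.colon ({x} : Set R) = F.F (n + evec s) ⊔ Ideal.span {y} := by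
    apply le_antisymm
    · rintro f ⟨hf, hf'⟩
      rw [SetLike.mem_coe, Submodule.mem_colon_singleton, smul_eq_mul] at hf'
      obtain ⟨g, hg, z, hz, rfl⟩ := Submodule.mem_sup.1 hf
      refine add_mem (h n (fun i => by linarith [hn i, Int.natCast_nonneg N, Int.natCast_nonneg N₂]) g hg ?_)
        (Submodule.mem_sup_right hz)
      have hz' : z * x ∈ C := Submodule.mem_sup_right (Ideal.mul_mem_right _ _ hz)
      have := sub_mem hf' hz'
      rwa [show (g + z) * x - z * x = x * g by ring] at this
    · refine sup_le (le_inf ?_ ?_) (le_inf le_sup_right ?_)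
      · exact (F.antitone _ _ (le_add_of_nonneg_right evec_nonneg)).trans le_sup_left
      · intro f hf
        rw [Submodule.mem_colon_singleton, smul_eq_mul, mul_comm]
        apply Submodule.mem_sup_left
        have := hx1 _ f hf
        rwa [add_right_comm] at this
      · intro f hf
        rw [Submodule.mem_colon_singleton, smul_eq_mul]
        exact Submodule.mem_sup_right (Ideal.mul_mem_right _ _ hf)
  have hle : Ideal.span {x} * A ⊔ C ≤ D := by
    refine sup_le ?_ (sup_le_sup_right (F.antitone _ _ (le_add_of_nonneg_right evec_nonneg)) _)
    rw [hA, Ideal.mul_sup]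
    refine sup_le_sup ?_ Ideal.mul_le_right
    intro f hf
    obtain ⟨r, hr, rfl⟩ := Ideal.mem_span_singleton_mul.1 hf
    exact hx1 n r hr
  have hlen := lq_x A C x fC fA
  rw [e1] at hlen
  have d1 := bdiff n (fun i => by linarith [hn i, Int.natCast_nonneg N₁, Int.natCast_nonneg N₂])
  have d2 := bdiff (n + Pi.single i 1) (fun j => by
    rw [Pi.add_apply]
    linarith [hn j, Int.natCast_nonneg N₁, Int.natCast_nonneg N₂, hsing j])
  have fx : lq (Ideal.span {x} * A ⊔ C) ≠ ⊤ := ne_top_of_le_ne_top fC (lq_anti le_sup_right)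
  have heq : Ideal.span {x} * A ⊔ C = D := by
    apply lq_eq_imp hle fx
    rw [← ENat.natCast_toNat fx, ← ENat.natCast_toNat fD]
    congr 1
    rw [← hA] at d1
    rw [← hC, ← hD] at d2
    omega
  have hnak : F.F (n + Pi.single i 1) ≤
      (Ideal.span {x} * F.F n ⊔ Ideal.span {y}) ⊔ maximalIdeal R • F.F (n + Pi.single i 1) := by
    refine (le_sup_left : _ ≤ D).trans ?_
    refine heq.symm.le.trans ?_
    rw [hA, hC, Ideal.mul_sup]
    have h1 : F.F (n + Pi.single i 1 + evec s) ≤ maximalIdeal R • F.F (n + Pi.single i 1) := by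
      rw [hN₂ _ (fun j => by
        rw [Pi.add_apply]
        linarith [hn j, Int.natCast_nonneg N₁, Int.natCast_nonneg N, hsing j]) _ evec_nonneg]
      exact Ideal.mul_mono_left (prodPow_le_max hI (j := ⟨0, hs⟩) rfl)
    refine sup_le (sup_le ?_ ?_) (sup_le ?_ ?_)
    · exact le_sup_left.trans le_sup_left
    · exact Ideal.mul_le_right.trans (le_sup_right.trans le_sup_left)
    · exact h1.trans le_sup_right
    · exact le_sup_right.trans le_sup_left
  exact Submodule.le_of_le_smul_of_le_jacobson_bot (IsNoetherian.noetherian _)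
    (IsLocalRing.maximalIdeal_le_jacobson _) hnak

lemma step_prod {F : AdmissibleFiltration R s I} {y : R} (x : Fin s → R) (N : ℕ)
    (h : ∀ i (n : Fin s → ℤ), (∀ i, (N : ℤ) ≤ n i) →
      F.F (n + Pi.single i 1) ≤ Ideal.span {x i} * F.F n ⊔ Ideal.span {y})
    (T : Finset (Fin s)) : ∀ (n : Fin s → ℤ), (∀ i, (N : ℤ) ≤ n i) →
      F.F (n + ∑ i ∈ T, Pi.single i 1) ≤ Ideal.span {∏ i ∈ T, x i} * F.F n ⊔ Ideal.span {y} := by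
  induction T using Finset.induction_on with
  | empty => intro n _; simp
  | insert a T ha ih =>
    intro n hn
    rw [Finset.prod_insert ha, Finset.sum_insert ha, add_comm (Pi.single a 1), ← add_assoc,
      ← Ideal.span_singleton_mul_span_singleton, mul_assoc]
    refine (h a _ fun i => (hn i).trans ?_).trans ?_
    · have : 0 ≤ (∑ i ∈ T, (Pi.single i 1 : Fin s → ℤ)) i :=
        (Finset.sum_nonneg fun i _ => single_nonneg i : (0 : Fin s → ℤ) ≤ _) i
      rw [Pi.add_apply]; linarith
    · refine sup_le ((Ideal.mul_mono_right (ih n hn)).trans ?_) le_sup_right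
      rw [Ideal.mul_sup]
      exact sup_le_sup le_rfl Ideal.mul_le_right

lemma exists_good [IsLocalRing R] [IsNoetherianRing R] [Infinite (IsLocalRing.ResidueField R)]
    (hs : 0 < s) (hI : ∀ i, IsMPrimary R (I i))
    {F : AdmissibleFiltration R s I} (hv : H1ReesVanishes F)
    {P : (Fin s → ℤ) → ℤ} (hP : Dg 2 P) (N : ℕ)
    (hN : ∀ n : Fin s → ℤ, (∀ i, (N : ℤ) ≤ n i) → P n = hilbFn F n) :
    ∃ x : Fin s → Fin 2 → R, IsGoodCompleteReduction F x := by
  obtain ⟨x₁, hx₁, hy⟩ := exists_y1 hv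
  set y := ∏ i, x₁ i with hydef
  have h := fun i => sup_filt F y i
  choose x₂ hx₂ N₁ hN₁ using h
  have h2 := fun i => step_one hs hI hy hP N hN (hx₂ i) (N₁ i) (hN₁ i)
  choose N₂ hN₂ using h2
  have h3 := step_prod (F := F) (y := y) x₂ (∑ i, N₂ i) (fun i n hn => hN₂ i n fun j => by
    have h1 : N₂ i ≤ ∑ i, N₂ i :=
      Finset.single_le_sum (f := N₂) (fun _ _ => Nat.zero_le _) (Finset.mem_univ i)
    have := hn j
    omega) Finset.univ
  rw [sum_single] at h3
  let x : Fin s → Fin 2 → R := fun i => ![x₁ i, x₂ i]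
  have hx : ∀ i j, x i j ∈ I i := by
    intro i j
    fin_cases j
    · exact hx₁ i
    · exact hx₂ i
  refine ⟨x, ⟨hx, ∑ i, N₂ i, fun n hn => le_antisymm (cr_mul_le hx n) ?_⟩, fun _ => ⟨1, fun m hm => ?_⟩⟩
  · intro f hf
    obtain ⟨a, ha, b, hb, hab⟩ := Submodule.mem_sup.1 (h3 n hn hf)
    obtain ⟨g, hg, rfl⟩ := Ideal.mem_span_singleton_mul.1 ha
    obtain ⟨r, rfl⟩ := Ideal.mem_span_singleton'.1 hb
    have hn0 : 0 ≤ n := fun i => (Int.natCast_nonneg _).trans (hn i)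
    have hr : r ∈ F.F n := by
      apply hy.2 n hn0
      rw [show y * r = f - (∏ i, x₂ i) * g by rw [← hab]; ring]
      exact sub_mem hf (F_mul_mem F (by rw [add_comm]) (prod_mem_e F x₂ hx₂) hg)
    rw [← hab, mul_comm r y, cr_span]
    refine add_mem (Ideal.mul_mem_mul (Ideal.subset_span ?_) hg)
      (Ideal.mul_mem_mul (Ideal.subset_span ?_) hr)
    · right; rfl
    · left; rfl
  · exact good_of_canc hy m hm

end PartF

/-- STATEMENT 18: Let `(R,m)` be Cohen–Macaulay local of dimension two with infinite
residue field, `I₁,…,I_s` `m`-primary with `s ≥ 2`, `F` an `I`-admissible filtration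
with `H¹_{R₊₊}(R(F))_n = 0` for all `n ≥ 0` (by Proposition 4.1 of the paper this is
the condition `F̆(n) = F(n)` for all `n ≥ 0`).  Then the following are equivalent:
(1) `P(F) = ℕˢ`, i.e. `P_F(n) = H_F(n)` for all `n ≥ 0`;
(2) `r_A(F) ≤ 1` for every good complete reduction `A` of `F`;
(2') there exists a good complete reduction `A` of `F` with `r_A(F) ≤ 1`. -/
theorem postulation_iff_reduction_number_le_one
    (R : Type*) [CommRing R] [IsLocalRing R] [IsNoetherianRing R]
    [Infinite (IsLocalRing.ResidueField R)]
    (s : ℕ) (hs : 2 ≤ s) (hdim : ringKrullDim R = 2) (hCM : IsCMLocal R)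
    (I : Fin s → Ideal R) (hI : ∀ i, IsMPrimary R (I i))
    (F : AdmissibleFiltration R s I)
    (c : (Fin s → ℕ) → ℤ) (hc : IsHilbCoeffs F 2 c)
    (hvanish : H1ReesVanishes F) :
    ((postSet F 2 c = {n | 0 ≤ n})
      ↔ (∀ x : Fin s → Fin 2 → R, IsGoodCompleteReduction F x → crNumber F x ≤ 1))
    ∧ ((∀ x : Fin s → Fin 2 → R, IsGoodCompleteReduction F x → crNumber F x ≤ 1)
      ↔ (∃ x : Fin s → Fin 2 → R, IsGoodCompleteReduction F x ∧ crNumber F x ≤ 1)) := by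
  have hP := hilbPoly_Dg (s := s) c
  obtain ⟨N, hN⟩ := hc
  obtain ⟨x₀, hx₀⟩ := exists_good (by omega) hI hvanish hP N hN
  have h12 : postSet F 2 c = {n | 0 ≤ n} →
      ∀ x : Fin s → Fin 2 → R, IsGoodCompleteReduction F x → crNumber F x ≤ 1 := by
    intro h x hx
    refine one_imp_two hdim hCM hI hvanish hx.1 hP fun n hn => ?_
    have h0 : (0 : Fin s → ℤ) ∈ postSet F 2 c := by rw [h]; exact le_refl (0 : Fin s → ℤ)
    exact (h0 n hn).symm
  have h21 : (∃ x : Fin s → Fin 2 → R, IsGoodCompleteReduction F x ∧ crNumber F x ≤ 1) →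
      postSet F 2 c = {n | 0 ≤ n} := by
    rintro ⟨x, hx, hr⟩
    apply Set.Subset.antisymm
    · intro n hn
      exact post_sub hs hdim hCM hI hvanish hx.1 hP N hN n hn
    · intro n hn m hm
      exact two_imp_one hdim hCM hI hvanish hx.1 hr hP N hN m (le_trans hn hm)
  exact ⟨⟨h12, fun h => h21 ⟨x₀, hx₀, h x₀ hx₀⟩⟩,
    ⟨fun h => ⟨x₀, hx₀, h x₀ hx₀⟩, fun h => h12 (h21 h)⟩⟩
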